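/- arXiv:1712.09477 — 2 statements merged into one kernel-verified Lean document; each statement's English description precedes it below -/
import Mathlib

section
/- Every double spider DS(L, P^core, R) in which both branch vertices have degree exactly 3 (deg(v_l) = deg(v_r) = 3) is strongly antimagic. -/
open Classical

noncomputable section

/-- The vertex sum at `u` of an edge labeling `f`: the sum of the labels of the
edges incident to `u`. -/
def vertexSum {V : Type*} [Fintype V] (G : SimpleGraph V) (f : Sym2 V → ℕ) (u : V) : ℕ :=
  ∑ e ∈ G.incidenceFinset u, f e

/-- `f` is an antimagic labeling of `G`: it is a bijection from the edge set of `G`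
onto `{1, …, |E|}` and the vertex sums are pairwise distinct. -/
def IsAntimagicLabeling {V : Type*} [Fintype V] (G : SimpleGraph V)
    (f : Sym2 V → ℕ) : Prop :=
  Set.BijOn f G.edgeSet (Set.Icc 1 G.edgeFinset.card) ∧
  Function.Injective (vertexSum G f)

/-- `f` is a strongly antimagic labeling of `G`: it is an antimagic labeling and moreover
`deg u < deg v` implies `vertexSum u < vertexSum v`. -/
def IsStronglyAntimagicLabeling {V : Type*} [Fintype V] (G : SimpleGraph V)
    (f : Sym2 V → ℕ) : Prop :=
  Set.BijOn f G.edgeSet (Set.Icc 1 G.edgeFinset.card) ∧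
  Function.Injective (vertexSum G f) ∧
  ∀ u v : V, G.degree u < G.degree v → vertexSum G f u < vertexSum G f v

/-- `G` is antimagic if it admits an antimagic labeling. -/
def IsAntimagic {V : Type*} [Fintype V] (G : SimpleGraph V) : Prop :=
  ∃ f : Sym2 V → ℕ, IsAntimagicLabeling G f

/-- `G` is strongly antimagic if it admits a strongly antimagic labeling. -/
def IsStronglyAntimagic {V : Type*} [Fintype V] (G : SimpleGraph V) : Prop :=
  ∃ f : Sym2 V → ℕ, IsStronglyAntimagicLabeling G f

/-- The vertex type of a double spider: the core path has vertices `0, …, s`,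
and each leg of length `ℓ` (an entry of `L` or of `R`) contributes `ℓ` further
vertices, at distances `1, …, ℓ` from the branch vertex it is attached to. -/
abbrev DSVert (s : ℕ) (L R : List ℕ) : Type :=
  Fin (s + 1) ⊕ (((i : Fin L.length) × Fin (L.get i)) ⊕ ((i : Fin R.length) × Fin (R.get i)))

/-- The double spider `DS(L, Pᶜᵒʳᵉ, R)`: the core path `v_l = 0 — 1 — ⋯ — s = v_r`,
together with, for each entry `ℓ` of `L` (resp. of `R`), a leg which is a path of
length `ℓ` attached at `v_l` (resp. at `v_r`). -/
def DoubleSpider (s : ℕ) (L R : List ℕ) : SimpleGraph (DSVert s L R) :=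
  SimpleGraph.fromRel fun x y =>
    match x, y with
    | Sum.inl a, Sum.inl b => (b : ℕ) = (a : ℕ) + 1
    | Sum.inl a, Sum.inr (Sum.inl p) => (a : ℕ) = 0 ∧ (p.2 : ℕ) = 0
    | Sum.inl a, Sum.inr (Sum.inr p) => (a : ℕ) = s ∧ (p.2 : ℕ) = 0
    | Sum.inr (Sum.inl p), Sum.inr (Sum.inl q) => p.1 = q.1 ∧ (q.2 : ℕ) = (p.2 : ℕ) + 1
    | Sum.inr (Sum.inr p), Sum.inr (Sum.inr q) => p.1 = q.1 ∧ (q.2 : ℕ) = (p.2 : ℕ) + 1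
    | _, _ => False

/-- The branch vertex `v_l` of a double spider. -/
def vL (s : ℕ) (L R : List ℕ) : DSVert s L R := Sum.inl 0

/-- The branch vertex `v_r` of a double spider. -/
def vR (s : ℕ) (L R : List ℕ) : DSVert s L R := Sum.inl (Fin.last s)

/-!
Lay the five paths of the double spider end to end, in the order left leg, right leg, core, left
leg, right leg, and label the edges by alternating, along each path, between the low labels
`1, …, p` and the high labels `p + 1, …, m`, each taken in increasing order. The sum at a vertex of
degree two is then `p + 2` plus its position, so these sums are distinct and at most `p + m`. The
only freedom is which paths start with a high label; it is used to make both branch sums large and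
distinct, depending on the parities of the path lengths and, up to swapping the legs at a branch
vertex and reflecting the spider, on their order.

Two repairs deal with an even core when this choice does not suffice. Shifting all labels up and
attaching new edges with the smallest labels at the leaves lengthens legs by one, which reduces odd
legs to even ones. Exchanging one pair of consecutive labels settles the last family.
-/

/-! ### Block labelings -/

section Blocks

variable {m : ℕ} (c : Fin m → ℕ)

/-- The total length of the blocks preceding block `i` when blocks of lengths `c 0, c 1, …` are
laid out consecutively. -/
def blockStart (i : Fin m) : ℕ := ∑ k ∈ Finset.Iio i, c k

variable {c}

theorem blockStart_add_le {i k : Fin m} (h : i < k) : blockStart c i + c i ≤ blockStart c k := by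
  rw [blockStart, add_comm, ← Finset.sum_insert Finset.notMem_Iio_self]
  refine Finset.sum_le_sum_of_subset fun x hx => ?_
  simp only [Finset.mem_insert, Finset.mem_Iio] at hx ⊢
  rcases hx with rfl | hx
  exacts [h, hx.trans h]

theorem blockStart_add_le_sum (i : Fin m) : blockStart c i + c i ≤ ∑ k, c k := by
  rw [blockStart, add_comm, ← Finset.sum_insert Finset.notMem_Iio_self]
  exact Finset.sum_le_sum_of_subset (Finset.subset_univ _)

theorem blockStart_mono : Monotone (blockStart c) := fun _ _ h =>
  Finset.sum_le_sum_of_subset (Finset.Iio_subset_Iio h)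

theorem blockStart_add_injOn :
    Set.InjOn (fun e : Fin m × ℕ => blockStart c e.1 + e.2) {e | e.2 < c e.1} := by
  rintro ⟨i, j⟩ (hj : j < c i) ⟨k, l⟩ (hl : l < c k) (h : blockStart c i + j = blockStart c k + l)
  rcases lt_trichotomy i k with hik | rfl | hki
  · have := blockStart_add_le (c := c) hik
    omega
  · rw [Nat.add_left_cancel h]
  · have := blockStart_add_le (c := c) hki
    omega

theorem blockStart_add (c d : Fin m → ℕ) (i : Fin m) :
    blockStart (c + d) i = blockStart c i + blockStart d i :=
  Finset.sum_add_distrib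

end Blocks

/-- The edges of five disjoint paths with `n i` edges on the `i`-th: `(i, j)` is the edge number
`j`, counted from `0`, of path `i`. Paths `0` and `3` are the legs at `v_l`, paths `1` and `4` the
legs at `v_r`, all read from the leaf, and path `2` is the core read from `v_l`. -/
def pathEdges (n : Fin 5 → ℕ) : Set (Fin 5 × ℕ) := {e | e.2 < n e.1}

/-- The vertices of degree two of the paths, each named after the first of its two edges. -/
def innerVerts (n : Fin 5 → ℕ) : Set (Fin 5 × ℕ) := {e | e.2 + 1 < n e.1}

/-- The vertex sum at the vertex between the edges `(i, j)` and `(i, j + 1)`. -/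
def innerSum (g : Fin 5 × ℕ → ℕ) (e : Fin 5 × ℕ) : ℕ := g e + g (e.1, e.2 + 1)

/-- The vertex sum at `v_l`. -/
def leftSum (n : Fin 5 → ℕ) (g : Fin 5 × ℕ → ℕ) : ℕ := g (0, n 0 - 1) + g (3, n 3 - 1) + g (2, 0)

/-- The vertex sum at `v_r`. -/
def rightSum (n : Fin 5 → ℕ) (g : Fin 5 × ℕ → ℕ) : ℕ :=
  g (1, n 1 - 1) + g (4, n 4 - 1) + g (2, n 2 - 1)

/-- The vertex sum `x` exceeds those at all vertices of degree at most two. -/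
structure DominatesSmall (n : Fin 5 → ℕ) (g : Fin 5 × ℕ → ℕ) (x : ℕ) : Prop where
  leaf_lt : ∀ k ≠ 2, g (k, 0) < x
  innerSum_lt : ∀ e ∈ innerVerts n, innerSum g e < x

/-- `g` is a strongly antimagic labeling of the double spider with path lengths `n`, expressed
through the labels of the path edges. -/
structure IsSpiderLabeling (n : Fin 5 → ℕ) (g : Fin 5 × ℕ → ℕ) : Prop where
  pos : ∀ i, 0 < n i
  bijOn : Set.BijOn g (pathEdges n) (Set.Icc 1 (∑ i, n i))
  innerSum_injOn : Set.InjOn (innerSum g) (innerVerts n)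
  leaf_lt_innerSum : ∀ k ≠ 2, ∀ e ∈ innerVerts n, g (k, 0) < innerSum g e
  left_dominates : DominatesSmall n g (leftSum n g)
  right_dominates : DominatesSmall n g (rightSum n g)
  leftSum_ne_rightSum : leftSum n g ≠ rightSum n g

theorem ncard_pathEdges (n : Fin 5 → ℕ) : (pathEdges n).ncard = ∑ i, n i := by
  have h : pathEdges n = (Finset.univ.sigma fun i => Finset.range (n i)).image
      (fun e => (e.1, e.2)) := by
    ext ⟨i, j⟩
    simp [pathEdges]
  rw [h, Set.ncard_coe_finset, Finset.card_image_of_injective, Finset.card_sigma]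
  · simp only [Finset.card_range]
  · rintro ⟨i, j⟩ ⟨k, l⟩ h
    simpa using h

theorem bijOn_pathEdges {n : Fin 5 → ℕ} {g : Fin 5 × ℕ → ℕ}
    (hmaps : Set.MapsTo g (pathEdges n) (Set.Icc 1 (∑ i, n i)))
    (hinj : Set.InjOn g (pathEdges n)) :
    Set.BijOn g (pathEdges n) (Set.Icc 1 (∑ i, n i)) := by
  refine ⟨hmaps, hinj, (Set.eq_of_subset_of_ncard_le hmaps.image_subset ?_).ge⟩
  rw [hinj.ncard_image, ncard_pathEdges, ← Finset.coe_Icc, Set.ncard_coe_finset, Nat.card_Icc,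
    Nat.add_sub_cancel]

section BlockLabeling

variable (n : Fin 5 → ℕ) (b : Fin 5 → Fin 2)

/-- The number of low labels on path `i` when labels alternate between low and high, starting low
if `b i = 0` and high if `b i = 1`. -/
def lowCount (i : Fin 5) : ℕ := (n i + 1 - b i) / 2

/-- The number of high labels on path `i` under the same conventions. -/
def highCount (i : Fin 5) : ℕ := (n i + b i) / 2

/-- The labeling which runs through the paths in order and along each path, alternately handing
out the next unused low label `1, 2, …, p` and the next unused high label `p + 1, p + 2, …`. -/
def blockLabel (e : Fin 5 × ℕ) : ℕ :=
  if (e.2 + b e.1) % 2 = 0 then blockStart (lowCount n b) e.1 + e.2 / 2 + 1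
  else ∑ i, lowCount n b i + blockStart (highCount n b) e.1 + e.2 / 2 + 1

theorem lowCount_add_highCount : lowCount n b + highCount n b = n := by
  ext i
  have := (b i).isLt
  simp only [Pi.add_apply, lowCount, highCount]
  omega

theorem blockStart_low_add_high (i : Fin 5) :
    blockStart (lowCount n b) i + blockStart (highCount n b) i = blockStart n i := by
  rw [← blockStart_add, lowCount_add_highCount]

theorem sum_low_add_sum_high : ∑ i, lowCount n b i + ∑ i, highCount n b i = ∑ i, n i := by
  rw [← Finset.sum_add_distrib]
  exact Finset.sum_congr rfl fun i _ => congrFun (lowCount_add_highCount n b) i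

/-- Low and high labels advance in turn, so the position of a vertex along the concatenation of the
paths determines its sum. -/
theorem innerSum_blockLabel (e : Fin 5 × ℕ) :
    innerSum (blockLabel n b) e =
      ∑ i, lowCount n b i + 2 + (blockStart n e.1 + e.2) := by
  have h := blockStart_low_add_high n b e.1
  simp only [innerSum, blockLabel]
  split_ifs <;> omega

variable {n b}

theorem blockLabel_low_or_high {e : Fin 5 × ℕ} (he : e ∈ pathEdges n) :
    ((e.2 + b e.1) % 2 = 0 ∧ e.2 / 2 < lowCount n b e.1 ∧
      blockLabel n b e = blockStart (lowCount n b) e.1 + e.2 / 2 + 1) ∨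
    ((e.2 + b e.1) % 2 = 1 ∧ e.2 / 2 < highCount n b e.1 ∧
      blockLabel n b e = ∑ i, lowCount n b i + (blockStart (highCount n b) e.1 + e.2 / 2) + 1) := by
  have hlt : e.2 < n e.1 := he
  have := (b e.1).isLt
  simp only [blockLabel, lowCount, highCount]
  split_ifs with h
  · exact Or.inl ⟨h, by omega, rfl⟩
  · exact Or.inr ⟨by omega, by omega, by omega⟩

theorem blockLabel_mapsTo : Set.MapsTo (blockLabel n b) (pathEdges n) (Set.Icc 1 (∑ i, n i)) := by
  intro e he
  have hsum := sum_low_add_sum_high n b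
  have hlow := blockStart_add_le_sum (c := lowCount n b) e.1
  have hhigh := blockStart_add_le_sum (c := highCount n b) e.1
  rw [Set.mem_Icc]
  rcases blockLabel_low_or_high (b := b) he with ⟨-, h, h'⟩ | ⟨-, h, h'⟩ <;> omega

theorem blockLabel_injOn : Set.InjOn (blockLabel n b) (pathEdges n) := by
  rintro ⟨i, j⟩ he ⟨k, l⟩ he' heq
  have hi := blockStart_add_le_sum (c := lowCount n b) i
  have hk := blockStart_add_le_sum (c := lowCount n b) k
  rcases blockLabel_low_or_high (b := b) he with ⟨hp, h, h'⟩ | ⟨hp, h, h'⟩ <;>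
  rcases blockLabel_low_or_high (b := b) he' with ⟨hq, g, g'⟩ | ⟨hq, g, g'⟩ <;>
  simp only at hp hq h h' g g'
  · have := @blockStart_add_injOn _ (lowCount n b) (i, j / 2) h (k, l / 2) g (by simp only; omega)
    obtain ⟨rfl, hjl⟩ := Prod.mk.inj this
    exact Prod.ext rfl (by simp only; omega)
  · omega
  · omega
  · have := @blockStart_add_injOn _ (highCount n b) (i, j / 2) h (k, l / 2) g (by simp only; omega)
    obtain ⟨rfl, hjl⟩ := Prod.mk.inj this
    exact Prod.ext rfl (by simp only; omega)

theorem blockLabel_bijOn : Set.BijOn (blockLabel n b) (pathEdges n) (Set.Icc 1 (∑ i, n i)) :=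
  bijOn_pathEdges blockLabel_mapsTo blockLabel_injOn

theorem innerSum_blockLabel_injOn : Set.InjOn (innerSum (blockLabel n b)) (innerVerts n) := by
  intro e he e' he' h
  rw [innerSum_blockLabel, innerSum_blockLabel] at h
  exact blockStart_add_injOn (Nat.lt_of_succ_lt he) (Nat.lt_of_succ_lt he') (Nat.add_left_cancel h)

theorem blockLabel_leaf_lt_innerSum (hpos : ∀ i, 0 < n i) {k : Fin 5}
    (hk : b k = 1 → ∀ i < k, n i = 1) {e : Fin 5 × ℕ} (he : e ∈ innerVerts n) :
    blockLabel n b (k, 0) < innerSum (blockLabel n b) e := by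
  have hsum := blockStart_add_le_sum (c := lowCount n b) k
  rw [innerSum_blockLabel]
  rcases blockLabel_low_or_high (b := b) (e := (k, 0)) (hpos k) with ⟨-, h, h'⟩ | ⟨hb, h, h'⟩
  · simp only at h h'
    omega
  · simp only at hb h h'
    have hke : k ≤ e.1 := by
      by_contra! hlt
      have he1 : e.2 + 1 < n e.1 := he
      have := hk (Fin.ext (by rw [Fin.val_one]; omega)) e.1 hlt
      omega
    have := blockStart_low_add_high n b k
    have := blockStart_mono (c := n) hke
    omega

theorem innerSum_blockLabel_le {e : Fin 5 × ℕ} (he : e ∈ innerVerts n) :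
    innerSum (blockLabel n b) e ≤ ∑ i, lowCount n b i + ∑ i, n i := by
  have he' : e.2 + 1 < n e.1 := he
  have := blockStart_add_le_sum (c := n) e.1
  rw [innerSum_blockLabel]
  omega

theorem innerSum_blockLabel_lt (h4 : n 4 = 1) {e : Fin 5 × ℕ} (he : e ∈ innerVerts n) :
    innerSum (blockLabel n b) e < ∑ i, lowCount n b i + ∑ i, n i := by
  have he' : e.2 + 1 < n e.1 := he
  have hlt : e.1 < 4 := lt_of_le_of_ne (Fin.le_last _) fun h => by rw [h] at he'; omega
  have := blockStart_add_le (c := n) hlt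
  have := blockStart_add_le_sum (c := n) 4
  rw [innerSum_blockLabel]
  omega

theorem dominatesSmall_blockLabel (hpos : ∀ i, 0 < n i) (hb : b 4 = 0) {x : ℕ}
    (hx : ∑ i, lowCount n b i + ∑ i, n i < x ∨
      n 4 = 1 ∧ ∑ i, lowCount n b i + ∑ i, n i = x) :
    DominatesSmall n (blockLabel n b) x where
  leaf_lt k _ := by
    have hlabel := (blockLabel_mapsTo (b := b) (show (k, 0) ∈ pathEdges n from hpos k)).2
    have hlow : lowCount n b 4 ≤ ∑ i, lowCount n b i :=
      Finset.single_le_sum (fun _ _ => Nat.zero_le _) (Finset.mem_univ _)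
    have hlow' : 0 < lowCount n b 4 := by
      have := hpos 4
      simp only [lowCount, hb, Fin.val_zero]
      omega
    omega
  innerSum_lt e he := by
    rcases hx with hx | ⟨h4, rfl⟩
    · exact (innerSum_blockLabel_le he).trans_lt hx
    · exact innerSum_blockLabel_lt h4 he

theorem isSpiderLabeling_blockLabel (hpos : ∀ i, 0 < n i) (hb : b 4 = 0)
    (hleaf : ∀ k ≠ 2, b k = 1 → ∀ i < k, n i = 1)
    (hleft : ∑ i, lowCount n b i + ∑ i, n i < leftSum n (blockLabel n b) ∨
      n 4 = 1 ∧ ∑ i, lowCount n b i + ∑ i, n i = leftSum n (blockLabel n b))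
    (hright : ∑ i, lowCount n b i + ∑ i, n i < rightSum n (blockLabel n b) ∨
      n 4 = 1 ∧ ∑ i, lowCount n b i + ∑ i, n i = rightSum n (blockLabel n b))
    (hne : leftSum n (blockLabel n b) ≠ rightSum n (blockLabel n b)) :
    IsSpiderLabeling n (blockLabel n b) where
  pos := hpos
  bijOn := blockLabel_bijOn
  innerSum_injOn := innerSum_blockLabel_injOn
  leaf_lt_innerSum k hk _ he := blockLabel_leaf_lt_innerSum hpos (hleaf k hk) he
  left_dominates := dominatesSmall_blockLabel hpos hb hleft
  right_dominates := dominatesSmall_blockLabel hpos hb hright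
  leftSum_ne_rightSum := hne

end BlockLabeling

/-! ### Symmetries and leaf extension -/

section Transport

variable {n n' : Fin 5 → ℕ} {g : Fin 5 × ℕ → ℕ} {τ ρ : Fin 5 × ℕ → Fin 5 × ℕ}

/-- Relabeling the edges by `τ`, when `ρ` describes its effect on the inner vertices. -/
theorem IsSpiderLabeling.comp (hg : IsSpiderLabeling n g)
    (hpos : ∀ i, 0 < n' i) (hsum : ∑ i, n' i = ∑ i, n i)
    (hτ : Set.MapsTo τ (pathEdges n') (pathEdges n)) (hτ' : Set.InjOn τ (pathEdges n'))
    (hρ : Set.MapsTo ρ (innerVerts n') (innerVerts n)) (hρ' : Set.InjOn ρ (innerVerts n'))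
    (hinner : ∀ e ∈ innerVerts n', innerSum (g ∘ τ) e = innerSum g (ρ e))
    (hleaf : ∀ k ≠ 2, ∃ l ≠ 2, τ (k, 0) = (l, 0))
    (hbranch : leftSum n' (g ∘ τ) = leftSum n g ∧ rightSum n' (g ∘ τ) = rightSum n g ∨
      leftSum n' (g ∘ τ) = rightSum n g ∧ rightSum n' (g ∘ τ) = leftSum n g) :
    IsSpiderLabeling n' (g ∘ τ) := by
  have hdom {x : ℕ} (hx : DominatesSmall n g x) : DominatesSmall n' (g ∘ τ) x := by
    refine ⟨fun k hk => ?_, fun e he => hinner e he ▸ hx.innerSum_lt _ (hρ he)⟩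
    obtain ⟨l, hl, hτl⟩ := hleaf k hk
    exact (congrArg g hτl).trans_lt (hx.leaf_lt l hl)
  refine ⟨hpos, bijOn_pathEdges ?_ (hg.bijOn.injOn.comp hτ' hτ), ?_, ?_, ?_, ?_, ?_⟩
  · exact hsum ▸ hg.bijOn.mapsTo.comp hτ
  · exact (Set.EqOn.injOn_iff hinner).2 (hg.innerSum_injOn.comp hρ' hρ)
  · intro k hk e he
    obtain ⟨l, hl, hτl⟩ := hleaf k hk
    rw [Function.comp_apply, hτl, hinner e he]
    exact hg.leaf_lt_innerSum l hl _ (hρ he)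
  · rcases hbranch with ⟨h, -⟩ | ⟨h, -⟩ <;> rw [h]
    exacts [hdom hg.left_dominates, hdom hg.right_dominates]
  · rcases hbranch with ⟨-, h⟩ | ⟨-, h⟩ <;> rw [h]
    exacts [hdom hg.right_dominates, hdom hg.left_dominates]
  · have := hg.leftSum_ne_rightSum
    omega

theorem IsSpiderLabeling.permute (hg : IsSpiderLabeling n g) {σ : Equiv.Perm (Fin 5)}
    (hσ : ∀ k ≠ 2, σ k ≠ 2)
    (hleft : leftSum (n ∘ σ) (g ∘ Prod.map σ id) = leftSum n g)
    (hright : rightSum (n ∘ σ) (g ∘ Prod.map σ id) = rightSum n g) :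
    IsSpiderLabeling (n ∘ σ) (g ∘ Prod.map σ id) :=
  have hinj : Function.Injective (Prod.map σ (id : ℕ → ℕ)) :=
    σ.injective.prodMap Function.injective_id
  hg.comp (ρ := Prod.map σ id) (fun i => hg.pos (σ i)) (Equiv.sum_comp σ n) (fun _ he => he)
    hinj.injOn (fun _ he => he) hinj.injOn (fun _ _ => rfl) (fun k hk => ⟨σ k, hσ k hk, rfl⟩)
    (Or.inl ⟨hleft, hright⟩)

/-- The exchange of left and right legs. -/
def mirrorPerm : Equiv.Perm (Fin 5) := Equiv.swap 0 1 * Equiv.swap 3 4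

/-- The reflection exchanging left and right legs and reversing the core, where `l` is the largest
position on the core. -/
def mirrorEdge (l : ℕ) (e : Fin 5 × ℕ) : Fin 5 × ℕ :=
  (mirrorPerm e.1, if e.1 = 2 then l - e.2 else e.2)

theorem mirrorEdge_core (l j : ℕ) : mirrorEdge l (2, j) = (2, l - j) := rfl

theorem mirrorEdge_leg (l : ℕ) {i : Fin 5} (hi : i ≠ 2) (j : ℕ) :
    mirrorEdge l (i, j) = (mirrorPerm i, j) := by
  simp only [mirrorEdge, hi, if_false]

theorem mirrorEdge_injOn {l : ℕ} {S : Set (Fin 5 × ℕ)} (hS : ∀ j, (2, j) ∈ S → j ≤ l) :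
    Set.InjOn (mirrorEdge l) S := by
  rintro ⟨i, j⟩ he ⟨k, m⟩ he' h
  obtain rfl : i = k := mirrorPerm.injective (congrArg Prod.fst h)
  by_cases hi : i = 2
  · subst hi
    have hjm : l - j = l - m := congrArg Prod.snd h
    have := hS j he
    have := hS m he'
    exact Prod.ext rfl (by simp only; omega)
  · rw [mirrorEdge_leg l hi, mirrorEdge_leg l hi] at h
    exact Prod.ext rfl (Prod.mk.inj h).2

theorem IsSpiderLabeling.mirror (hg : IsSpiderLabeling n g) :
    IsSpiderLabeling (n ∘ mirrorPerm) (g ∘ mirrorEdge (n 2 - 1)) := by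
  have hpos := hg.pos 2
  refine hg.comp (ρ := mirrorEdge (n 2 - 2)) (fun i => hg.pos _) (Equiv.sum_comp mirrorPerm n)
    ?_ (mirrorEdge_injOn fun j => Nat.le_sub_one_of_lt) ?_
    (mirrorEdge_injOn fun j (h : j + 1 < n 2) => by omega) ?_ ?_ (Or.inr ⟨rfl, ?_⟩)
  · rintro ⟨i, j⟩ h
    by_cases hi : i = 2
    · subst hi
      exact (Nat.sub_le _ _).trans_lt (Nat.sub_one_lt_of_lt hpos)
    · exact mirrorEdge_leg _ hi j ▸ h
  · rintro ⟨i, j⟩ h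
    by_cases hi : i = 2
    · subst hi
      have : j + 1 < n 2 := h
      change n 2 - 2 - j + 1 < n 2
      omega
    · exact mirrorEdge_leg _ hi j ▸ h
  · rintro ⟨i, j⟩ h
    by_cases hi : i = 2
    · subst hi
      have : j + 1 < n 2 := h
      simp only [innerSum, Function.comp_apply, mirrorEdge_core]
      rw [show n 2 - 1 - (j + 1) = n 2 - 2 - j by omega,
        show n 2 - 2 - j + 1 = n 2 - 1 - j by omega, add_comm]
    · simp only [innerSum, Function.comp_apply, mirrorEdge_leg _ hi]
  · exact fun k hk => ⟨mirrorPerm k, fun h => hk (mirrorPerm.injective h), mirrorEdge_leg _ hk 0⟩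
  · change _ + g (2, n 2 - 1 - (n 2 - 1)) = _ + g (2, 0)
    rw [Nat.sub_self]
    rfl

end Transport

/-- The double spider with left legs of lengths `a`, `a'`, core of length `s` and right legs of
lengths `b`, `b'` has a strongly antimagic labeling. -/
def HasLabeling (a a' s b b' : ℕ) : Prop := ∃ g, IsSpiderLabeling ![a, b, s, a', b'] g

namespace HasLabeling

variable {a a' s b b' : ℕ}

theorem swap_left (h : HasLabeling a a' s b b') : HasLabeling a' a s b b' := by
  obtain ⟨g, hg⟩ := h
  have hn : ![a, b, s, a', b'] ∘ Equiv.swap 0 3 = ![a', b, s, a, b'] := by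
    funext i
    fin_cases i <;> rfl
  rw [HasLabeling, ← hn]
  exact ⟨_, hg.permute (by decide)
    (congrArg (· + g (2, 0)) (Nat.add_comm (g (3, a' - 1)) (g (0, a - 1)))) rfl⟩

theorem mirror (h : HasLabeling a a' s b b') : HasLabeling b b' s a a' := by
  obtain ⟨g, hg⟩ := h
  have hn : ![a, b, s, a', b'] ∘ mirrorPerm = ![b, a, s, b', a'] := by
    funext i
    fin_cases i <;> rfl
  exact ⟨_, hn ▸ hg.mirror⟩

theorem swap_right (h : HasLabeling a a' s b b') : HasLabeling a a' s b' b :=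
  h.mirror.swap_left.mirror

end HasLabeling

section Extension

variable {n : Fin 5 → ℕ} {g : Fin 5 × ℕ → ℕ} {T : Finset (Fin 5)}

/-- Path lengths after prepending an edge at the leaf of each leg in `T`. -/
def extendLength (n : Fin 5 → ℕ) (T : Finset (Fin 5)) (i : Fin 5) : ℕ :=
  n i + if i ∈ T then 1 else 0

/-- The rank of the leaf label of leg `i` among those of the legs in `T`. -/
def leafRank (g : Fin 5 × ℕ → ℕ) (T : Finset (Fin 5)) (i : Fin 5) : ℕ :=
  (T.filter fun k => g (k, 0) ≤ g (i, 0)).card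

/-- The position of an old edge after the extension. -/
def shiftEdge (T : Finset (Fin 5)) (e : Fin 5 × ℕ) : Fin 5 × ℕ :=
  (e.1, if e.1 ∈ T then e.2 + 1 else e.2)

/-- The extended labeling: the new edges receive the labels `1, …, |T|` in the order of the old
leaf labels, and all old labels are raised by `|T|`. -/
def extendLabel (g : Fin 5 × ℕ → ℕ) (T : Finset (Fin 5)) (e : Fin 5 × ℕ) : ℕ :=
  if e.1 ∈ T then if e.2 = 0 then leafRank g T e.1 else g (e.1, e.2 - 1) + T.card
  else g e + T.card

theorem extendLabel_new {i : Fin 5} (hi : i ∈ T) : extendLabel g T (i, 0) = leafRank g T i := by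
  simp only [extendLabel, hi, if_true]

theorem extendLabel_shiftEdge (e : Fin 5 × ℕ) :
    extendLabel g T (shiftEdge T e) = g e + T.card := by
  by_cases h : e.1 ∈ T <;> simp [extendLabel, shiftEdge, h]

theorem mem_pathEdges_extendLength {e : Fin 5 × ℕ} (he : e ∈ pathEdges (extendLength n T)) :
    (∃ i ∈ T, e = (i, 0)) ∨ ∃ e₀ ∈ pathEdges n, e = shiftEdge T e₀ := by
  obtain ⟨i, j⟩ := e
  have hj : j < n i + if i ∈ T then 1 else 0 := he
  by_cases hi : i ∈ T
  · rw [if_pos hi] at hj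
    rcases j with _ | j
    · exact Or.inl ⟨i, hi, rfl⟩
    · exact Or.inr ⟨(i, j), Nat.lt_of_succ_lt_succ hj, by simp only [shiftEdge, if_pos hi]⟩
  · rw [if_neg hi] at hj
    exact Or.inr ⟨(i, j), hj, by simp only [shiftEdge, if_neg hi]⟩

theorem mem_innerVerts_extendLength {e : Fin 5 × ℕ} (he : e ∈ innerVerts (extendLength n T)) :
    (∃ i ∈ T, e = (i, 0)) ∨ ∃ e₀ ∈ innerVerts n, e = shiftEdge T e₀ := by
  rcases mem_pathEdges_extendLength (Nat.lt_of_succ_lt he) with h | ⟨e₀, -, rfl⟩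
  · exact Or.inl h
  · refine Or.inr ⟨e₀, ?_, rfl⟩
    have : (shiftEdge T e₀).2 + 1 < n e₀.1 + if e₀.1 ∈ T then 1 else 0 := he
    change e₀.2 + 1 < n e₀.1
    simp only [shiftEdge] at this
    split_ifs at this <;> omega

theorem leafRank_pos {i : Fin 5} (hi : i ∈ T) : 0 < leafRank g T i :=
  Finset.card_pos.2 ⟨i, Finset.mem_filter.2 ⟨hi, le_rfl⟩⟩

theorem leafRank_le (i : Fin 5) : leafRank g T i ≤ T.card := Finset.card_filter_le _ _

theorem leafRank_le_leafRank {i k : Fin 5} (h : g (i, 0) ≤ g (k, 0)) :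
    leafRank g T i ≤ leafRank g T k :=
  Finset.card_le_card (Finset.monotone_filter_right _ fun _ _ hx => le_trans hx h)

theorem leafRank_lt_leafRank {i k : Fin 5} (hk : k ∈ T) (h : g (i, 0) < g (k, 0)) :
    leafRank g T i < leafRank g T k := by
  refine Finset.card_lt_card (Finset.ssubset_iff_of_subset ?_ |>.2 ⟨k, ?_, ?_⟩)
  · exact Finset.monotone_filter_right _ fun _ _ hx => hx.trans h.le
  · exact Finset.mem_filter.2 ⟨hk, le_rfl⟩
  · exact fun hx => h.not_ge (Finset.mem_filter.1 hx).2

theorem innerSum_extendLabel_new {i : Fin 5} (hi : i ∈ T) :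
    innerSum (extendLabel g T) (i, 0) = leafRank g T i + g (i, 0) + T.card := by
  simp [innerSum, extendLabel, hi, add_assoc]

theorem innerSum_extendLabel_shiftEdge (e : Fin 5 × ℕ) :
    innerSum (extendLabel g T) (shiftEdge T e) = innerSum g e + 2 * T.card := by
  have hsucc : ((shiftEdge T e).1, (shiftEdge T e).2 + 1) = shiftEdge T (e.1, e.2 + 1) := by
    simp only [shiftEdge]
    split_ifs <;> rfl
  rw [innerSum, hsucc, extendLabel_shiftEdge, extendLabel_shiftEdge, innerSum]
  ring

theorem extendLabel_last {i : Fin 5} (hi : 0 < n i) :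
    extendLabel g T (i, extendLength n T i - 1) = g (i, n i - 1) + T.card := by
  rw [← extendLabel_shiftEdge]
  congr 2
  simp only [extendLength]
  split_ifs <;> omega

theorem leftSum_extendLabel (hpos : ∀ i, 0 < n i) (hT : 2 ∉ T) :
    leftSum (extendLength n T) (extendLabel g T) = leftSum n g + 3 * T.card := by
  rw [leftSum, extendLabel_last (hpos 0), extendLabel_last (hpos 3), leftSum]
  simp only [extendLabel, hT, if_false]
  ring

theorem rightSum_extendLabel (hpos : ∀ i, 0 < n i) :
    rightSum (extendLength n T) (extendLabel g T) = rightSum n g + 3 * T.card := by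
  rw [rightSum, extendLabel_last (hpos 1), extendLabel_last (hpos 4), extendLabel_last (hpos 2),
    rightSum]
  ring

theorem sum_extendLength : ∑ i, extendLength n T i = ∑ i, n i + T.card := by
  simp only [extendLength, Finset.sum_add_distrib, Finset.sum_ite_mem, Finset.univ_inter,
    Finset.sum_const, smul_eq_mul, mul_one]

theorem IsSpiderLabeling.leafRank_injOn (hg : IsSpiderLabeling n g) :
    Set.InjOn (leafRank g T) T := by
  intro i hi k hk h
  have hik : g (i, 0) = g (k, 0) := by
    rcases lt_trichotomy (g (i, 0)) (g (k, 0)) with hlt | heq | hgt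
    · exact absurd h (leafRank_lt_leafRank hk hlt).ne
    · exact heq
    · exact absurd h (leafRank_lt_leafRank hi hgt).ne'
  have hmem : ∀ l, (l, 0) ∈ pathEdges n := hg.pos
  exact congrArg Prod.fst (hg.bijOn.injOn (hmem i) (hmem k) hik)

theorem IsSpiderLabeling.extendLabel_bijOn (hg : IsSpiderLabeling n g) :
    Set.BijOn (extendLabel g T) (pathEdges (extendLength n T))
      (Set.Icc 1 (∑ i, extendLength n T i)) := by
  refine bijOn_pathEdges ?_ ?_
  · intro e he
    rw [sum_extendLength, Set.mem_Icc]
    rcases mem_pathEdges_extendLength he with ⟨i, hi, rfl⟩ | ⟨f, hf, rfl⟩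
    · rw [extendLabel_new hi]
      have := leafRank_pos (g := g) hi
      have := leafRank_le (g := g) (T := T) i
      omega
    · rw [extendLabel_shiftEdge]
      obtain ⟨h1, h2⟩ := hg.bijOn.mapsTo hf
      omega
  · have hold : ∀ i, ∀ e ∈ pathEdges n, leafRank g T i ≠ g e + T.card := by
      intro i e he
      have := leafRank_le (g := g) (T := T) i
      have := (hg.bijOn.mapsTo he).1
      omega
    intro e he e' he' h
    rcases mem_pathEdges_extendLength he with ⟨i, hi, rfl⟩ | ⟨f, hf, rfl⟩ <;>
    rcases mem_pathEdges_extendLength he' with ⟨k, hk, rfl⟩ | ⟨f', hf', rfl⟩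
    · rw [extendLabel_new hi, extendLabel_new hk] at h
      rw [hg.leafRank_injOn hi hk h]
    · rw [extendLabel_new hi, extendLabel_shiftEdge] at h
      exact absurd h (hold i f' hf')
    · rw [extendLabel_shiftEdge, extendLabel_new hk] at h
      exact absurd h.symm (hold k f hf)
    · rw [extendLabel_shiftEdge, extendLabel_shiftEdge] at h
      rw [hg.bijOn.injOn hf hf' (Nat.add_right_cancel h)]

theorem IsSpiderLabeling.innerSum_new_lt_innerSum_old (hg : IsSpiderLabeling n g) (hT : 2 ∉ T)
    {i : Fin 5} (hi : i ∈ T) {e : Fin 5 × ℕ} (he : e ∈ innerVerts n) :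
    innerSum (extendLabel g T) (i, 0) < innerSum (extendLabel g T) (shiftEdge T e) := by
  have := leafRank_le (g := g) (T := T) i
  have := hg.leaf_lt_innerSum i (ne_of_mem_of_not_mem hi hT) e he
  rw [innerSum_extendLabel_new hi, innerSum_extendLabel_shiftEdge]
  omega

theorem IsSpiderLabeling.innerSum_extendLabel_injOn (hg : IsSpiderLabeling n g) (hT : 2 ∉ T) :
    Set.InjOn (innerSum (extendLabel g T)) (innerVerts (extendLength n T)) := by
  intro e he e' he' h
  rcases mem_innerVerts_extendLength he with ⟨i, hi, rfl⟩ | ⟨f, hf, rfl⟩ <;>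
  rcases mem_innerVerts_extendLength he' with ⟨k, hk, rfl⟩ | ⟨f', hf', rfl⟩
  · rw [innerSum_extendLabel_new hi, innerSum_extendLabel_new hk] at h
    have hik : leafRank g T i = leafRank g T k := by
      rcases le_total (g (i, 0)) (g (k, 0)) with hle | hle <;>
      · have := leafRank_le_leafRank (T := T) hle
        omega
    rw [hg.leafRank_injOn hi hk hik]
  · exact absurd h (hg.innerSum_new_lt_innerSum_old hT hi hf').ne
  · exact absurd h (hg.innerSum_new_lt_innerSum_old hT hk hf).ne'
  · rw [innerSum_extendLabel_shiftEdge, innerSum_extendLabel_shiftEdge] at h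
    rw [hg.innerSum_injOn hf hf' (Nat.add_right_cancel h)]

theorem IsSpiderLabeling.extendLabel_leaf_lt_innerSum (hg : IsSpiderLabeling n g)
    (hleaf : ∀ k ≠ 2, k ∉ T → ∀ i ∈ T, g (k, 0) ≤ g (i, 0)) {k : Fin 5} (hk : k ≠ 2)
    {e : Fin 5 × ℕ} (he : e ∈ innerVerts (extendLength n T)) :
    extendLabel g T (k, 0) < innerSum (extendLabel g T) e := by
  by_cases hkT : k ∈ T
  · have hrank := leafRank_le (g := g) (T := T) k
    rw [extendLabel_new hkT]
    rcases mem_innerVerts_extendLength he with ⟨i, hi, rfl⟩ | ⟨f, hf, rfl⟩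
    · have := leafRank_pos (g := g) hi
      rw [innerSum_extendLabel_new hi]
      omega
    · have := hg.leaf_lt_innerSum k hk f hf
      rw [innerSum_extendLabel_shiftEdge]
      omega
  · simp only [extendLabel, hkT, if_false]
    rcases mem_innerVerts_extendLength he with ⟨i, hi, rfl⟩ | ⟨f, hf, rfl⟩
    · have := leafRank_pos (g := g) hi
      have := hleaf k hk hkT i hi
      rw [innerSum_extendLabel_new hi]
      omega
    · have := hg.leaf_lt_innerSum k hk f hf
      rw [innerSum_extendLabel_shiftEdge]
      omega

theorem DominatesSmall.extendLabel (hT : 2 ∉ T) {x : ℕ} (hx : DominatesSmall n g x) :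
    DominatesSmall (extendLength n T) (extendLabel g T) (x + 3 * T.card) where
  leaf_lt k hk := by
    have := hx.leaf_lt k hk
    have := leafRank_le (g := g) (T := T) k
    simp only [_root_.extendLabel]
    split_ifs <;> omega
  innerSum_lt e he := by
    rcases mem_innerVerts_extendLength he with ⟨i, hi, rfl⟩ | ⟨f, hf, rfl⟩
    · have := hx.leaf_lt i (ne_of_mem_of_not_mem hi hT)
      have := leafRank_le (g := g) (T := T) i
      rw [innerSum_extendLabel_new hi]
      omega
    · have := hx.innerSum_lt f hf
      rw [innerSum_extendLabel_shiftEdge]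
      omega

theorem IsSpiderLabeling.extend (hg : IsSpiderLabeling n g) (hT : 2 ∉ T)
    (hleaf : ∀ k ≠ 2, k ∉ T → ∀ i ∈ T, g (k, 0) ≤ g (i, 0)) :
    IsSpiderLabeling (extendLength n T) (extendLabel g T) where
  pos i := Nat.add_pos_left (hg.pos i) _
  bijOn := hg.extendLabel_bijOn
  innerSum_injOn := hg.innerSum_extendLabel_injOn hT
  leaf_lt_innerSum k hk _ he := hg.extendLabel_leaf_lt_innerSum hleaf hk he
  left_dominates := leftSum_extendLabel (g := g) hg.pos hT ▸ hg.left_dominates.extendLabel hT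
  right_dominates := rightSum_extendLabel (g := g) (T := T) hg.pos ▸
    hg.right_dominates.extendLabel hT
  leftSum_ne_rightSum := by
    rw [leftSum_extendLabel hg.pos hT, rightSum_extendLabel hg.pos]
    exact fun h => hg.leftSum_ne_rightSum (Nat.add_right_cancel h)

end Extension

/-! ### Branch sums and label exchange -/

section FivePaths

variable (c : Fin 5 → ℕ)

theorem blockStart_zero : blockStart c 0 = 0 := rfl

theorem blockStart_one : blockStart c 1 = c 0 := Finset.sum_singleton c 0

theorem blockStart_two : blockStart c 2 = c 0 + c 1 := by
  rw [blockStart, show Finset.Iio (2 : Fin 5) = {0, 1} by decide, Finset.sum_pair (by decide)]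

theorem blockStart_three : blockStart c 3 = c 0 + c 1 + c 2 := by
  rw [blockStart, show Finset.Iio (3 : Fin 5) = {0, 1, 2} by decide]
  simp [add_assoc]

theorem blockStart_four : blockStart c 4 = c 0 + c 1 + c 2 + c 3 := by
  rw [blockStart, show Finset.Iio (4 : Fin 5) = {0, 1, 2, 3} by decide]
  simp [add_assoc]

end FivePaths

section BranchSums

variable {n : Fin 5 → ℕ} {b : Fin 5 → Fin 2}

theorem blockLabel_last {i : Fin 5} (hi : 0 < n i) :
    blockLabel n b (i, n i - 1) =
      if (n i + b i) % 2 = 1 then blockStart (lowCount n b) i + lowCount n b i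
      else ∑ i, lowCount n b i + (blockStart (highCount n b) i + highCount n b i) := by
  have := (b i).isLt
  simp only [blockLabel, lowCount, highCount]
  split_ifs <;> omega

theorem blockLabel_first (i : Fin 5) :
    blockLabel n b (i, 0) =
      if (b i : ℕ) = 0 then blockStart (lowCount n b) i + 1
      else ∑ i, lowCount n b i + blockStart (highCount n b) i + 1 := by
  have := (b i).isLt
  simp only [blockLabel]
  split_ifs <;> omega

theorem leftSum_blockLabel (hpos : ∀ i, 0 < n i) :
    leftSum n (blockLabel n b) =
      (if (n 0 + b 0) % 2 = 1 then lowCount n b 0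
        else ∑ i, lowCount n b i + highCount n b 0) +
      (if (n 3 + b 3) % 2 = 1 then
          lowCount n b 0 + lowCount n b 1 + lowCount n b 2 + lowCount n b 3
        else ∑ i, lowCount n b i +
          (highCount n b 0 + highCount n b 1 + highCount n b 2 + highCount n b 3)) +
      (if (b 2 : ℕ) = 0 then lowCount n b 0 + lowCount n b 1 + 1
        else ∑ i, lowCount n b i + (highCount n b 0 + highCount n b 1) + 1) := by
  rw [leftSum, blockLabel_last (hpos 0), blockLabel_last (hpos 3), blockLabel_first]
  simp only [blockStart_zero, blockStart_two, blockStart_three, zero_add]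

theorem rightSum_blockLabel (hpos : ∀ i, 0 < n i) :
    rightSum n (blockLabel n b) =
      (if (n 1 + b 1) % 2 = 1 then lowCount n b 0 + lowCount n b 1
        else ∑ i, lowCount n b i + (highCount n b 0 + highCount n b 1)) +
      (if (n 4 + b 4) % 2 = 1 then ∑ i, lowCount n b i
        else ∑ i, lowCount n b i + ∑ i, highCount n b i) +
      (if (n 2 + b 2) % 2 = 1 then lowCount n b 0 + lowCount n b 1 + lowCount n b 2
        else ∑ i, lowCount n b i + (highCount n b 0 + highCount n b 1 + highCount n b 2)) := by
  rw [rightSum, blockLabel_last (hpos 1), blockLabel_last (hpos 4), blockLabel_last (hpos 2)]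
  simp only [blockStart_one, blockStart_two, blockStart_four, Fin.sum_univ_five]

end BranchSums

section Exchange

variable {n : Fin 5 → ℕ} {b : Fin 5 → Fin 2}

/-- The block labeling with the labels of the last core edge and of the first edge of the second
left leg exchanged. -/
def exchangedLabel (n : Fin 5 → ℕ) (b : Fin 5 → Fin 2) (e : Fin 5 × ℕ) : ℕ :=
  Equiv.swap (blockLabel n b (2, n 2 - 1)) (blockLabel n b (3, 0)) (blockLabel n b e)

theorem exchangedLabel_core_last : exchangedLabel n b (2, n 2 - 1) = blockLabel n b (3, 0) :=
  Equiv.swap_apply_left _ _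

theorem exchangedLabel_leg : exchangedLabel n b (3, 0) = blockLabel n b (2, n 2 - 1) :=
  Equiv.swap_apply_right _ _

theorem exchangedLabel_of_ne (hpos : ∀ i, 0 < n i) {e : Fin 5 × ℕ} (he : e ∈ pathEdges n)
    (h2 : e ≠ (2, n 2 - 1)) (h3 : e ≠ (3, 0)) : exchangedLabel n b e = blockLabel n b e :=
  Equiv.swap_apply_of_ne_of_ne
    (blockLabel_injOn.ne he (Nat.sub_one_lt_of_lt (hpos 2) : (2, n 2 - 1) ∈ pathEdges n) h2)
    (blockLabel_injOn.ne he (hpos 3 : (3, 0) ∈ pathEdges n) h3)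

theorem exchangedLabel_bijOn (hpos : ∀ i, 0 < n i) :
    Set.BijOn (exchangedLabel n b) (pathEdges n) (Set.Icc 1 (∑ i, n i)) := by
  refine bijOn_pathEdges (fun e he => ?_) ((Equiv.injective _).comp_injOn blockLabel_injOn)
  by_cases h2 : e = (2, n 2 - 1)
  · rw [h2, exchangedLabel_core_last]
    exact blockLabel_mapsTo (hpos 3)
  by_cases h3 : e = (3, 0)
  · rw [h3, exchangedLabel_leg]
    exact blockLabel_mapsTo (Nat.sub_one_lt_of_lt (hpos 2))
  · rw [exchangedLabel_of_ne hpos he h2 h3]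
    exact blockLabel_mapsTo he

theorem innerSum_exchangedLabel (hpos : ∀ i, 0 < n i) (h3 : n 3 = 1)
    (hsucc : blockLabel n b (3, 0) = blockLabel n b (2, n 2 - 1) + 1) {e : Fin 5 × ℕ}
    (he : e ∈ innerVerts n) :
    innerSum (exchangedLabel n b) e =
      innerSum (blockLabel n b) e + if (e.1, e.2 + 1) = (2, n 2 - 1) then 1 else 0 := by
  obtain ⟨i, j⟩ := e
  have hj : j + 1 < n i := he
  have hi : i ≠ 3 := by
    rintro rfl
    omega
  have hfirst : exchangedLabel n b (i, j) = blockLabel n b (i, j) := by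
    refine exchangedLabel_of_ne hpos (Nat.lt_of_succ_lt hj) ?_ fun h => hi (congrArg Prod.fst h)
    rintro h
    obtain ⟨rfl, rfl⟩ := Prod.mk.inj h
    omega
  rw [innerSum, hfirst, innerSum]
  split_ifs with h
  · rw [h, exchangedLabel_core_last, hsucc]
    ring
  · rw [exchangedLabel_of_ne hpos hj h fun h' => hi (congrArg Prod.fst h'), add_zero]

theorem innerSum_exchangedLabel_injOn (hpos : ∀ i, 0 < n i) (h3 : n 3 = 1)
    (hsucc : blockLabel n b (3, 0) = blockLabel n b (2, n 2 - 1) + 1) :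
    Set.InjOn (innerSum (exchangedLabel n b)) (innerVerts n) := by
  have hgap {e e' : Fin 5 × ℕ} (he : (e.1, e.2 + 1) = (2, n 2 - 1)) (he' : e' ∈ innerVerts n) :
      innerSum (blockLabel n b) e' ≠ innerSum (blockLabel n b) e + 1 := by
    intro h
    have hmem : e' ∈ {e : Fin 5 × ℕ | e.2 < n e.1} := Nat.lt_of_succ_lt he'
    have hnext : (e.1, e.2 + 1) ∈ {e : Fin 5 × ℕ | e.2 < n e.1} :=
      he ▸ Nat.sub_one_lt_of_lt (hpos 2)
    rw [innerSum_blockLabel, innerSum_blockLabel] at h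
    have heq := blockStart_add_injOn hmem hnext (by simp only; omega)
    have hlt : e'.2 + 1 < n e'.1 := he'
    rw [heq, he] at hlt
    simp only at hlt
    omega
  intro e he e' he' h
  rw [innerSum_exchangedLabel hpos h3 hsucc he, innerSum_exchangedLabel hpos h3 hsucc he'] at h
  split_ifs at h with h2 h2' h2'
  · exact innerSum_blockLabel_injOn he he' (Nat.add_right_cancel h)
  · exact absurd h.symm (hgap h2 he')
  · exact absurd h (hgap h2' he)
  · exact innerSum_blockLabel_injOn he he' h

theorem exchangedLabel_leaf_le (hpos : ∀ i, 0 < n i)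
    (hsucc : blockLabel n b (3, 0) = blockLabel n b (2, n 2 - 1) + 1) {k : Fin 5} (hk : k ≠ 2) :
    exchangedLabel n b (k, 0) ≤ blockLabel n b (k, 0) := by
  by_cases h3 : k = 3
  · rw [h3, exchangedLabel_leg, hsucc]
    exact Nat.le_succ _
  · exact (exchangedLabel_of_ne hpos (hpos k) (fun h => hk (congrArg Prod.fst h))
      fun h => h3 (congrArg Prod.fst h)).le

theorem innerSum_exchangedLabel_le (hpos : ∀ i, 0 < n i) (h3 : n 3 = 1)
    (hsucc : blockLabel n b (3, 0) = blockLabel n b (2, n 2 - 1) + 1) {e : Fin 5 × ℕ}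
    (he : e ∈ innerVerts n) :
    innerSum (exchangedLabel n b) e ≤ ∑ i, lowCount n b i + ∑ i, n i := by
  rw [innerSum_exchangedLabel hpos h3 hsucc he]
  split_ifs with h
  · obtain ⟨h2, -⟩ := Prod.mk.inj h
    have he' : e.2 + 1 < n e.1 := he
    have hlt := blockStart_add_le (c := n) (show e.1 < 3 from h2 ▸ by decide)
    have hle := blockStart_add_le_sum (c := n) 3
    rw [innerSum_blockLabel]
    omega
  · exact innerSum_blockLabel_le he

theorem leftSum_exchangedLabel (hpos : ∀ i, 0 < n i) (h2 : n 2 ≠ 1) (h3 : n 3 = 1)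
    (hsucc : blockLabel n b (3, 0) = blockLabel n b (2, n 2 - 1) + 1) :
    leftSum n (exchangedLabel n b) + 1 = leftSum n (blockLabel n b) := by
  have hpos2 := hpos 2
  simp only [leftSum, h3, Nat.sub_self]
  rw [exchangedLabel_leg, hsucc,
    exchangedLabel_of_ne hpos (e := (0, n 0 - 1)) (Nat.sub_one_lt_of_lt (hpos 0))
      (by simp) (by simp),
    exchangedLabel_of_ne hpos (e := (2, 0)) hpos2 (fun h => by have := (Prod.mk.inj h).2; omega)
      (by simp)]
  ring

theorem rightSum_exchangedLabel (hpos : ∀ i, 0 < n i)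
    (hsucc : blockLabel n b (3, 0) = blockLabel n b (2, n 2 - 1) + 1) :
    rightSum n (exchangedLabel n b) = rightSum n (blockLabel n b) + 1 := by
  rw [rightSum, exchangedLabel_core_last, hsucc,
    exchangedLabel_of_ne hpos (e := (1, n 1 - 1)) (Nat.sub_one_lt_of_lt (hpos 1))
      (by simp) (by simp),
    exchangedLabel_of_ne hpos (e := (4, n 4 - 1)) (Nat.sub_one_lt_of_lt (hpos 4))
      (by simp) (by simp),
    rightSum]
  ring

theorem dominatesSmall_exchangedLabel (hpos : ∀ i, 0 < n i) (hb : b 4 = 0) (h3 : n 3 = 1)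
    (hsucc : blockLabel n b (3, 0) = blockLabel n b (2, n 2 - 1) + 1) {x : ℕ}
    (hx : ∑ i, lowCount n b i + ∑ i, n i < x) : DominatesSmall n (exchangedLabel n b) x where
  leaf_lt k hk := (exchangedLabel_leaf_le hpos hsucc hk).trans_lt
    ((dominatesSmall_blockLabel hpos hb (Or.inl hx)).leaf_lt k hk)
  innerSum_lt _ he := (innerSum_exchangedLabel_le hpos h3 hsucc he).trans_lt hx

theorem isSpiderLabeling_exchangedLabel (hpos : ∀ i, 0 < n i) (hb : b 4 = 0) (h3 : n 3 = 1)
    (hsucc : blockLabel n b (3, 0) = blockLabel n b (2, n 2 - 1) + 1)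
    (hleaf : ∀ k ≠ 2, b k = 1 → ∀ i < k, n i = 1)
    (h2 : n 2 ≠ 1)
    (hleft : ∑ i, lowCount n b i + ∑ i, n i + 1 < leftSum n (blockLabel n b))
    (hright : ∑ i, lowCount n b i + ∑ i, n i ≤ rightSum n (blockLabel n b))
    (hne : leftSum n (blockLabel n b) ≠ rightSum n (blockLabel n b) + 2) :
    IsSpiderLabeling n (exchangedLabel n b) := by
  have hl := leftSum_exchangedLabel hpos h2 h3 hsucc
  have hr := rightSum_exchangedLabel hpos hsucc
  refine ⟨hpos, exchangedLabel_bijOn hpos, innerSum_exchangedLabel_injOn hpos h3 hsucc,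
    fun k hk e he => ?_, dominatesSmall_exchangedLabel hpos hb h3 hsucc (by omega),
    dominatesSmall_exchangedLabel hpos hb h3 hsucc (by omega), by omega⟩
  have hle := exchangedLabel_leaf_le hpos hsucc hk
  have hlt := blockLabel_leaf_lt_innerSum hpos (hleaf k hk) he
  rw [innerSum_exchangedLabel hpos h3 hsucc he]
  omega

end Exchange

/-! ### The parity cases -/

namespace HasLabeling

variable {a a' s b b' : ℕ}

theorem lengths_pos (ha : 0 < a) (ha' : 0 < a') (hs : 0 < s) (hb : 0 < b) (hb' : 0 < b')
    (i : Fin 5) : 0 < (![a, b, s, a', b'] : Fin 5 → ℕ) i := by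
  fin_cases i <;> assumption

theorem of_even_right_of_le (ha : 0 < a) (ha' : 0 < a') (hs : 0 < s) (hb' : 0 < b')
    (hle : b' ≤ b) (hb_even : Even b) (hb'_even : Even b') (hleft : Even a → Even a') :
    HasLabeling a a' s b b' := by
  have hpos := lengths_pos ha ha' hs (hb'.trans_le hle) hb'
  rw [Nat.even_iff] at hb_even hb'_even
  rw [Nat.even_iff, Nat.even_iff] at hleft
  refine ⟨_, isSpiderLabeling_blockLabel (b := ![1, 0, 1, 0, 0]) hpos rfl ?_ ?_ ?_ ?_⟩
  · simp [Fin.forall_fin_succ]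
  all_goals
    simp only [leftSum_blockLabel hpos, rightSum_blockLabel hpos, lowCount, highCount,
      Fin.sum_univ_five, Matrix.cons_val, Fin.val_zero, Fin.val_one, one_ne_zero, if_false]
    split_ifs <;> omega

theorem of_even_right (ha : 0 < a) (ha' : 0 < a') (hs : 0 < s) (hb : 0 < b) (hb' : 0 < b')
    (hb_even : Even b) (hb'_even : Even b') : HasLabeling a a' s b b' := by
  wlog hle : b' ≤ b generalizing b b'
  · exact (this hb' hb hb'_even hb_even (le_of_not_ge hle)).swap_right
  by_cases hleft : Even a → Even a'
  · exact of_even_right_of_le ha ha' hs hb' hle hb_even hb'_even hleft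
  · refine (of_even_right_of_le ha' ha hs hb' hle hb_even hb'_even fun h => ?_).swap_left
    exact absurd (fun _ => h) hleft

theorem of_odd_core_of_odd_left_of_le (hs : Odd s) (ha : Odd a) (ha' : Odd a') (hb' : 0 < b')
    (hle : b' ≤ b) (hle' : a' ≤ a) : HasLabeling a a' s b b' := by
  have hpos := lengths_pos ha.pos ha'.pos hs.pos (hb'.trans_le hle) hb'
  rw [Nat.odd_iff] at ha ha' hs
  refine ⟨_, isSpiderLabeling_blockLabel (b := ![1, 0, 1, 0, 0]) hpos rfl ?_ ?_ ?_ ?_⟩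
  · simp [Fin.forall_fin_succ]
  all_goals
    simp only [leftSum_blockLabel hpos, rightSum_blockLabel hpos, lowCount, highCount,
      Fin.sum_univ_five, Matrix.cons_val, Fin.val_zero, Fin.val_one, one_ne_zero, if_false]
    split_ifs <;> omega

theorem of_odd_core_of_mixed (hs : Odd s) (ha : Odd a) (ha' : Even a') (ha'_pos : 0 < a')
    (hb : Odd b) (hb' : Even b') (hb'_pos : 0 < b') : HasLabeling a a' s b b' := by
  have hpos := lengths_pos ha.pos ha'_pos hs.pos hb.pos hb'_pos
  rw [Nat.odd_iff] at hs ha hb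
  rw [Nat.even_iff] at ha' hb'
  refine ⟨_, isSpiderLabeling_blockLabel (b := ![1, 0, 1, 0, 0]) hpos rfl ?_ ?_ ?_ ?_⟩
  · simp [Fin.forall_fin_succ]
  all_goals
    simp only [leftSum_blockLabel hpos, rightSum_blockLabel hpos, lowCount, highCount,
      Fin.sum_univ_five, Matrix.cons_val, Fin.val_zero, Fin.val_one, one_ne_zero, if_false]
    split_ifs <;> omega

theorem of_even_core_of_mixed_of_le (hs : Even s) (hs_pos : 0 < s) (ha : Odd a) (ha' : Even a')
    (ha'_pos : 0 < a') (hb : Even b) (hb_pos : 0 < b) (hb' : Odd b') (hle : b' ≤ a) :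
    HasLabeling a a' s b b' := by
  have hpos := lengths_pos ha.pos ha'_pos hs_pos hb_pos hb'.pos
  rw [Nat.odd_iff] at ha hb'
  rw [Nat.even_iff] at hs ha' hb
  refine ⟨_, isSpiderLabeling_blockLabel (b := ![1, 0, 0, 0, 0]) hpos rfl ?_ ?_ ?_ ?_⟩
  · simp [Fin.forall_fin_succ]
  all_goals
    simp only [leftSum_blockLabel hpos, rightSum_blockLabel hpos, lowCount, highCount,
      Fin.sum_univ_five, Matrix.cons_val, Fin.val_zero, Fin.val_one]
    split_ifs <;> omega

theorem of_even_core_of_odd_left_of_mixed_of_le (hs : Even s) (hs_pos : 0 < s) (ha : Odd a)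
    (ha' : Odd a') (hb : Even b) (hb' : Odd b') (hle : b' ≤ b)
    (h : a' = 1 ∨ a' ≤ a ∧ b' = 1) : HasLabeling a a' s b b' := by
  have hpos := lengths_pos ha.pos ha'.pos hs_pos (hb'.pos.trans_le hle) hb'.pos
  rw [Nat.odd_iff] at ha ha' hb'
  rw [Nat.even_iff] at hs hb
  refine ⟨_, isSpiderLabeling_blockLabel (b := ![1, 0, 1, 0, 0]) hpos rfl ?_ ?_ ?_ ?_⟩
  · simp [Fin.forall_fin_succ]
  all_goals
    simp only [leftSum_blockLabel hpos, rightSum_blockLabel hpos, lowCount, highCount,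
      Fin.sum_univ_five, Matrix.cons_val, Fin.val_zero, Fin.val_one, one_ne_zero, if_false]
    split_ifs <;> omega

theorem of_even_core_of_left_eq_one (hs : Even s) (hs_pos : 0 < s) (ha : a = 1) (ha' : Odd a')
    (hb : Odd b) (hb'_pos : 0 < b') (h : b' < b ∧ (Even b' ∨ a' = 1) ∨ b' = 1 ∧ a' ≤ b) :
    HasLabeling a a' s b b' := by
  have hpos := lengths_pos (ha ▸ one_pos) ha'.pos hs_pos hb.pos hb'_pos
  rw [Nat.odd_iff] at ha' hb
  rw [Nat.even_iff] at hs h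
  refine ⟨_, isSpiderLabeling_blockLabel (b := ![1, 1, 1, 0, 0]) hpos rfl ?_ ?_ ?_ ?_⟩
  · simpa [Fin.forall_fin_succ] using ha
  all_goals
    simp only [leftSum_blockLabel hpos, rightSum_blockLabel hpos, lowCount, highCount,
      Fin.sum_univ_five, Matrix.cons_val, Fin.val_zero, Fin.val_one, one_ne_zero, if_false]
    split_ifs <;> omega

/-- The right branch sum of the block labeling is too small by one here; the exchange repairs it. -/
theorem of_even_core_of_left_eq_one_of_right_eq (hs : Even s) (hs_pos : 0 < s) (hb : Odd b)
    (hb_ne : b ≠ 1) (ha : a = 1) : HasLabeling a 1 s b b := by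
  have hpos := lengths_pos (ha ▸ one_pos) one_pos hs_pos hb.pos hb.pos
  rw [Nat.odd_iff] at hb
  rw [Nat.even_iff] at hs
  have hsucc : blockLabel ![a, b, s, 1, b] ![1, 1, 1, 0, 0] (3, 0) =
      blockLabel ![a, b, s, 1, b] ![1, 1, 1, 0, 0] (2, s - 1) + 1 := by
    simp only [blockLabel, blockStart_two, blockStart_three, lowCount, highCount, Matrix.cons_val,
      Fin.val_zero, Fin.val_one]
    split_ifs <;> omega
  have hs_ne : s ≠ 1 := by omega
  refine ⟨_, isSpiderLabeling_exchangedLabel hpos rfl rfl hsucc ?_ hs_ne ?_ ?_ ?_⟩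
  · simpa [Fin.forall_fin_succ] using ha
  all_goals
    simp only [leftSum_blockLabel hpos, rightSum_blockLabel hpos, lowCount, highCount,
      Fin.sum_univ_five, Matrix.cons_val, Fin.val_zero, Fin.val_one, one_ne_zero, if_false]
    split_ifs <;> omega

theorem succ_legs (h : HasLabeling a a' s b b') :
    HasLabeling (a + 1) (a' + 1) s (b + 1) (b' + 1) := by
  obtain ⟨g, hg⟩ := h
  have hn : extendLength ![a, b, s, a', b'] {0, 1, 3, 4} = ![a + 1, b + 1, s, a' + 1, b' + 1] := by
    funext i
    fin_cases i <;> rfl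
  exact ⟨_, hn ▸ hg.extend (T := {0, 1, 3, 4}) (by decide)
    fun k hk hkT => absurd hkT (by decide +revert)⟩

theorem of_even_core_of_even_of_le (hs : Even s) (hs_pos : 0 < s) (ha' : Even a')
    (ha'_pos : 0 < a') (hb : Even b) (hb' : Even b') (hb'_pos : 0 < b') (hle : b' ≤ b) :
    HasLabeling 1 (a' + 1) s (b + 1) (b' + 1) := by
  have hpos := lengths_pos one_pos ha'_pos hs_pos (hb'_pos.trans_le hle) hb'_pos
  rw [Nat.even_iff] at hs ha' hb hb'
  have hg : IsSpiderLabeling ![1, b, s, a', b']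
      (blockLabel ![1, b, s, a', b'] ![0, 0, 1, 0, 0]) := by
    refine isSpiderLabeling_blockLabel hpos rfl ?_ ?_ ?_ ?_
    · simp [Fin.forall_fin_succ]
    all_goals
      simp only [leftSum_blockLabel hpos, rightSum_blockLabel hpos, lowCount, highCount,
        Fin.sum_univ_five, Matrix.cons_val, Fin.val_zero, Fin.val_one, one_ne_zero, if_false]
      split_ifs <;> omega
  have hn : extendLength ![1, b, s, a', b'] {1, 3, 4} = ![1, b + 1, s, a' + 1, b' + 1] := by
    funext i
    fin_cases i <;> rfl
  refine ⟨_, hn ▸ hg.extend (T := {1, 3, 4}) (by decide) fun k hk hkT i _ => ?_⟩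
  obtain rfl : k = 0 := by decide +revert
  change 1 ≤ _
  exact (hg.bijOn.mapsTo (hpos i : (i, 0) ∈ pathEdges _)).1

theorem of_even_left (ha : 0 < a) (ha' : 0 < a') (hs : 0 < s) (hb : 0 < b) (hb' : 0 < b')
    (ha_even : Even a) (ha'_even : Even a') : HasLabeling a a' s b b' :=
  (of_even_right hb hb' hs ha ha' ha_even ha'_even).mirror

theorem of_odd_core_of_odd_left (hs : Odd s) (ha : Odd a) (ha' : Odd a') (hb : 0 < b)
    (hb' : 0 < b') : HasLabeling a a' s b b' := by
  wlog hle : b' ≤ b generalizing b b'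
  · exact (this hb' hb (le_of_not_ge hle)).swap_right
  wlog hle' : a' ≤ a generalizing a a'
  · exact (this ha' ha (le_of_not_ge hle')).swap_left
  exact of_odd_core_of_odd_left_of_le hs ha ha' hb' hle hle'

theorem of_odd_core (hs : Odd s) (ha : 0 < a) (ha' : 0 < a') (hb : 0 < b) (hb' : 0 < b') :
    HasLabeling a a' s b b' := by
  wlog hle : Even a → Even a' generalizing a a'
  · exact (this ha' ha (by tauto)).swap_left
  wlog hle' : Even b → Even b' generalizing b b'
  · exact (this hb' hb (by tauto)).swap_right
  rcases Nat.even_or_odd a with ha_even | ha_odd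
  · exact of_even_left ha ha' hs.pos hb hb' ha_even (hle ha_even)
  rcases Nat.even_or_odd b with hb_even | hb_odd
  · exact of_even_right ha ha' hs.pos hb hb' hb_even (hle' hb_even)
  rcases Nat.even_or_odd a' with ha'_even | ha'_odd
  · rcases Nat.even_or_odd b' with hb'_even | hb'_odd
    · exact of_odd_core_of_mixed hs ha_odd ha'_even ha' hb_odd hb'_even hb'
    · exact (of_odd_core_of_odd_left hs hb_odd hb'_odd ha ha').mirror
  · exact of_odd_core_of_odd_left hs ha_odd ha'_odd hb hb'

theorem of_even_core_of_mixed (hs : Even s) (hs_pos : 0 < s) (ha : Odd a) (ha' : Even a')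
    (ha'_pos : 0 < a') (hb : Odd b) (hb' : Even b') (hb'_pos : 0 < b') :
    HasLabeling a a' s b b' := by
  wlog hle : b ≤ a generalizing a a' b b'
  · exact (this hb hb' hb'_pos ha ha' ha'_pos (le_of_not_ge hle)).mirror
  exact (of_even_core_of_mixed_of_le hs hs_pos ha ha' ha'_pos hb' hb'_pos hb hle).swap_right

theorem of_even_core_of_odd_left_of_mixed_of_eq_one (hs : Even s) (hs_pos : 0 < s) (ha : Odd a)
    (ha' : a' = 1) (hb : Even b) (hb_pos : 0 < b) (hb' : Odd b') : HasLabeling a a' s b b' := by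
  have ha'_odd : Odd a' := ha' ▸ odd_one
  rcases le_or_gt b' b with hle | hlt
  · exact of_even_core_of_odd_left_of_mixed_of_le hs hs_pos ha ha'_odd hb hb' hle (Or.inl ha')
  · exact (of_even_core_of_left_eq_one hs hs_pos ha' ha hb' hb_pos
      (Or.inl ⟨hlt, Or.inl hb⟩)).swap_left.swap_right

theorem of_even_core_of_odd_left_of_mixed (hs : Even s) (hs_pos : 0 < s) (ha : Odd a)
    (ha' : Odd a') (hb : Even b) (hb_pos : 0 < b) (hb' : Odd b') : HasLabeling a a' s b b' := by
  by_cases ha_one : a = 1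
  · exact (of_even_core_of_odd_left_of_mixed_of_eq_one hs hs_pos ha' ha_one hb hb_pos hb').swap_left
  by_cases ha'_one : a' = 1
  · exact of_even_core_of_odd_left_of_mixed_of_eq_one hs hs_pos ha ha'_one hb hb_pos hb'
  by_cases hb'_one : b' = 1
  · wlog hle : a' ≤ a generalizing a a'
    · exact (this ha' ha ha'_one ha_one (le_of_not_ge hle)).swap_left
    exact of_even_core_of_odd_left_of_mixed_of_le hs hs_pos ha ha' hb hb' (hb'_one ▸ hb_pos)
      (Or.inr ⟨hle, hb'_one⟩)
  obtain ⟨k, rfl⟩ := ha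
  obtain ⟨k', rfl⟩ := ha'
  obtain ⟨l', rfl⟩ := hb'
  obtain ⟨l, rfl⟩ := Nat.exists_eq_add_one.2 hb_pos
  exact succ_legs (of_even_left (by omega) (by omega) hs_pos (by grind) (by omega)
    (even_two_mul k) (even_two_mul k'))

theorem of_even_core_of_odd_of_left_eq_one (hs : Even s) (hs_pos : 0 < s) (ha : a = 1)
    (ha' : Odd a') (hb : Odd b) (hb' : Odd b') : HasLabeling a a' s b b' := by
  wlog hle : b' ≤ b generalizing b b'
  · exact (this hb' hb (le_of_not_ge hle)).swap_right
  by_cases hb'_one : b' = 1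
  · rcases le_total a' b with ha'b | hba'
    · exact of_even_core_of_left_eq_one hs hs_pos ha ha' hb hb'.pos (Or.inr ⟨hb'_one, ha'b⟩)
    · exact (of_even_core_of_left_eq_one hs hs_pos hb'_one hb ha' (ha ▸ one_pos)
        (Or.inr ⟨ha, hba'⟩)).mirror.swap_left.swap_right
  by_cases ha'_one : a' = 1
  · rcases hle.lt_or_eq with hlt | rfl
    · exact of_even_core_of_left_eq_one hs hs_pos ha ha' hb hb'.pos
        (Or.inl ⟨hlt, Or.inr ha'_one⟩)
    · exact ha'_one ▸ of_even_core_of_left_eq_one_of_right_eq hs hs_pos hb hb'_one ha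
  obtain ⟨k', rfl⟩ := ha'
  obtain ⟨l, rfl⟩ := hb
  obtain ⟨l', rfl⟩ := hb'
  exact ha ▸ of_even_core_of_even_of_le hs hs_pos (even_two_mul k') (by omega) (even_two_mul l)
    (even_two_mul l') (by omega) (by omega)

theorem of_even_core_of_odd (hs : Even s) (hs_pos : 0 < s) (ha : Odd a) (ha' : Odd a')
    (hb : Odd b) (hb' : Odd b') : HasLabeling a a' s b b' := by
  by_cases ha_one : a = 1
  · exact of_even_core_of_odd_of_left_eq_one hs hs_pos ha_one ha' hb hb'
  by_cases ha'_one : a' = 1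
  · exact (of_even_core_of_odd_of_left_eq_one hs hs_pos ha'_one ha hb hb').swap_left
  by_cases hb_one : b = 1
  · exact (of_even_core_of_odd_of_left_eq_one hs hs_pos hb_one hb' ha ha').mirror
  by_cases hb'_one : b' = 1
  · exact (of_even_core_of_odd_of_left_eq_one hs hs_pos hb'_one hb ha ha').mirror.swap_right
  obtain ⟨k, rfl⟩ := ha
  obtain ⟨k', rfl⟩ := ha'
  obtain ⟨l, rfl⟩ := hb
  obtain ⟨l', rfl⟩ := hb'
  exact succ_legs (of_even_left (by omega) (by omega) hs_pos (by omega) (by omega)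
    (even_two_mul k) (even_two_mul k'))

theorem of_even_core (hs : Even s) (hs_pos : 0 < s) (ha : 0 < a) (ha' : 0 < a') (hb : 0 < b)
    (hb' : 0 < b') : HasLabeling a a' s b b' := by
  wlog hleft : Even a → Even a' generalizing a a'
  · exact (this ha' ha (by tauto)).swap_left
  wlog hright : Even b → Even b' generalizing b b'
  · exact (this hb' hb (by tauto)).swap_right
  rcases Nat.even_or_odd a with ha_even | ha_odd
  · exact of_even_left ha ha' hs_pos hb hb' ha_even (hleft ha_even)
  rcases Nat.even_or_odd b with hb_even | hb_odd
  · exact of_even_right ha ha' hs_pos hb hb' hb_even (hright hb_even)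
  rcases Nat.even_or_odd a' with ha'_even | ha'_odd <;>
  rcases Nat.even_or_odd b' with hb'_even | hb'_odd
  · exact of_even_core_of_mixed hs hs_pos ha_odd ha'_even ha' hb_odd hb'_even hb'
  · exact (of_even_core_of_odd_left_of_mixed hs hs_pos hb_odd hb'_odd ha'_even ha'
      ha_odd).swap_right.mirror
  · exact (of_even_core_of_odd_left_of_mixed hs hs_pos ha_odd ha'_odd hb'_even hb'
      hb_odd).swap_right
  · exact of_even_core_of_odd hs hs_pos ha_odd ha'_odd hb_odd hb'_odd

end HasLabeling

theorem hasLabeling {a a' s b b' : ℕ} (ha : 0 < a) (ha' : 0 < a') (hs : 0 < s) (hb : 0 < b)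
    (hb' : 0 < b') : HasLabeling a a' s b b' := by
  rcases Nat.even_or_odd s with hs_even | hs_odd
  · exact .of_even_core hs_even hs ha ha' hb hb'
  · exact .of_odd_core hs_odd ha ha' hb hb'

/-! ### From path labelings to the graph -/

section ParentMaps

variable {V X : Type*}

/-- The graph `G` is the forest of a parent map: its vertices are named by elements of `X`, and its
edges join each `x ∈ P` to its parent `head x`, so that `P` indexes the edges. -/
structure IsParentMap (G : SimpleGraph V) (pos : V → X) (P : Set X) (head : X → X) : Prop where
  injective : Function.Injective pos
  subset_range : P ⊆ Set.range pos
  head_mem_range : ∀ x ∈ P, head x ∈ Set.range pos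
  head_head_ne : ∀ x ∈ P, head x ∈ P → head (head x) ≠ x
  adj_iff : ∀ u v, G.Adj u v ↔
    pos u ∈ P ∧ head (pos u) = pos v ∨ pos v ∈ P ∧ head (pos v) = pos u

namespace IsParentMap

variable {G : SimpleGraph V} {pos : V → X} {P : Set X} {head : X → X}

theorem injOn_mk_head (h : IsParentMap G pos P head) : Set.InjOn (fun x => s(x, head x)) P := by
  intro x hx y hy hxy
  rcases Sym2.eq_iff.1 hxy with ⟨heq, -⟩ | ⟨hx', hy'⟩
  · exact heq
  · exact absurd (hy' ▸ hx'.symm) (h.head_head_ne x hx (hy' ▸ hy))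

theorem bijOn_map_pos (h : IsParentMap G pos P head) :
    Set.BijOn (Sym2.map pos) G.edgeSet ((fun x => s(x, head x)) '' P) := by
  refine ⟨?_, (Sym2.map.injective h.injective).injOn, ?_⟩
  · rintro ⟨u, v⟩ huv
    rcases (h.adj_iff u v).1 huv with ⟨hu, heq⟩ | ⟨hv, heq⟩
    · exact ⟨pos u, hu, congrArg (s(pos u, ·)) heq⟩
    · exact ⟨pos v, hv, (congrArg (s(pos v, ·)) heq).trans Sym2.eq_swap⟩
  · rintro _ ⟨x, hx, rfl⟩
    obtain ⟨u, rfl⟩ := h.subset_range hx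
    obtain ⟨v, hv⟩ := h.head_mem_range _ hx
    exact ⟨s(u, v), (h.adj_iff u v).2 (Or.inl ⟨hx, hv.symm⟩), congrArg (s(pos u, ·)) hv⟩

theorem exists_bijOn_edgeSet [Nonempty X] (h : IsParentMap G pos P head) :
    ∃ φ : Sym2 V → X, Set.BijOn φ G.edgeSet P ∧
      ∀ e ∈ G.edgeSet, ∀ u, u ∈ e ↔ φ e = pos u ∨ head (φ e) = pos u := by
  have hbij := h.injOn_mk_head.bijOn_image
  have hinv := hbij.invOn_invFunOn
  refine ⟨Function.invFunOn (fun x => s(x, head x)) P ∘ Sym2.map pos,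
    (hbij.symm hinv.symm).comp h.bijOn_map_pos, fun e he u => ?_⟩
  have hends := hinv.2 (h.bijOn_map_pos.mapsTo he)
  calc u ∈ e ↔ pos u ∈ Sym2.map pos e := by
        rw [Sym2.mem_map]
        exact ⟨fun hu => ⟨u, hu, rfl⟩, fun ⟨v, hv, huv⟩ => h.injective huv ▸ hv⟩
    _ ↔ _ := by rw [← hends, Sym2.mem_iff, eq_comm, eq_comm (a := pos u) (b := head _)]; rfl

theorem exists_edge_indexing [Fintype V] [Nonempty X] (h : IsParentMap G pos P head) :
    ∃ φ : Sym2 V → X, Set.BijOn φ G.edgeSet P ∧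
      ∀ (u : V) (T : Finset X), (∀ x, x ∈ T ↔ x ∈ P ∧ (x = pos u ∨ head x = pos u)) →
        G.degree u = T.card ∧ ∀ g : X → ℕ, vertexSum G (g ∘ φ) u = ∑ x ∈ T, g x := by
  obtain ⟨φ, hφ, hmem⟩ := h.exists_bijOn_edgeSet
  refine ⟨φ, hφ, fun u T hT => ?_⟩
  have hinj : Set.InjOn φ (G.incidenceFinset u) := hφ.injOn.mono fun e he => by
    exact ((G.mem_incidenceFinset u e).1 he).1
  have himage : (G.incidenceFinset u).image φ = T := by
    ext x
    rw [Finset.mem_image, hT]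
    constructor
    · rintro ⟨e, he, rfl⟩
      have he := (G.mem_incidenceFinset u e).1 he
      exact ⟨hφ.mapsTo he.1, (hmem e he.1 u).1 he.2⟩
    · rintro ⟨hx, hxu⟩
      obtain ⟨e, he, rfl⟩ := hφ.surjOn hx
      exact ⟨e, (G.mem_incidenceFinset u e).2 ⟨he, (hmem e he u).2 hxu⟩, rfl⟩
  rw [← himage]
  exact ⟨by rw [Finset.card_image_of_injOn hinj, G.card_incidenceFinset_eq_degree],
    fun g => (Finset.sum_image hinj).symm⟩

end IsParentMap

end ParentMaps

/-- The second end of an edge of `pathEdges`, where vertices are named as follows: `(i, j)` is the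
first end of the edge `(i, j)`, so that `v_l` is `(2, 0)`, and `v_r` is `(2, n 2)`. -/
def pathHead (n : Fin 5 → ℕ) (e : Fin 5 × ℕ) : Fin 5 × ℕ :=
  if e.1 = 2 ∨ e.2 + 1 < n e.1 then (e.1, e.2 + 1)
  else if e.1 = 0 ∨ e.1 = 3 then (2, 0) else (2, n 2)

/-- The edges at a vertex, in the naming of `pathHead`. -/
def incidentEdges (n : Fin 5 → ℕ) (x : Fin 5 × ℕ) : Set (Fin 5 × ℕ) :=
  {e ∈ pathEdges n | e = x ∨ pathHead n e = x}

/-- `IsVertexData n g x d m` says that the vertex named `x` (see `pathHead`) has degree `d` and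
vertex sum `m` under the labeling `g`. -/
inductive IsVertexData (n : Fin 5 → ℕ) (g : Fin 5 × ℕ → ℕ) : Fin 5 × ℕ → ℕ → ℕ → Prop
  | leaf {k : Fin 5} (hk : k ≠ 2) : IsVertexData n g (k, 0) 1 (g (k, 0))
  | inner {e : Fin 5 × ℕ} (he : e ∈ innerVerts n) :
      IsVertexData n g (e.1, e.2 + 1) 2 (innerSum g e)
  | left : IsVertexData n g (2, 0) 3 (leftSum n g)
  | right : IsVertexData n g (2, n 2) 3 (rightSum n g)

section VertexData

variable {n : Fin 5 → ℕ} {g : Fin 5 × ℕ → ℕ}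

theorem pathHead_mem {e : Fin 5 × ℕ} (he : e ∈ pathEdges n) :
    pathHead n e ∈ pathEdges n ∨ pathHead n e = (2, n 2) := by
  obtain ⟨i, j⟩ := e
  simp only [pathEdges, pathHead, Set.mem_ofPred_eq] at he ⊢
  grind

theorem pathHead_pathHead_ne {e : Fin 5 × ℕ} (he : e ∈ pathEdges n) :
    pathHead n (pathHead n e) ≠ e := by
  obtain ⟨i, j⟩ := e
  simp only [pathEdges, pathHead, Set.mem_ofPred_eq] at he ⊢
  grind

theorem incidentEdges_leaf {k : Fin 5} (hk : k ≠ 2) (hn : 0 < n k) :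
    incidentEdges n (k, 0) = ({(k, 0)} : Finset (Fin 5 × ℕ)) := by
  ext ⟨i, j⟩
  simp only [incidentEdges, pathEdges, pathHead, Set.mem_ofPred_eq]
  grind

theorem incidentEdges_inner {e : Fin 5 × ℕ} (he : e ∈ innerVerts n) :
    incidentEdges n (e.1, e.2 + 1) = ({e, (e.1, e.2 + 1)} : Finset (Fin 5 × ℕ)) := by
  obtain ⟨i, j⟩ := e
  ext ⟨k, l⟩
  simp only [incidentEdges, pathEdges, pathHead, innerVerts, Set.mem_ofPred_eq] at he ⊢
  grind

theorem incidentEdges_left (hn : ∀ i, 0 < n i) : incidentEdges n (2, 0) =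
    ({(0, n 0 - 1), (3, n 3 - 1), (2, 0)} : Finset (Fin 5 × ℕ)) := by
  ext ⟨i, j⟩
  have := hn 0
  have := hn 3
  fin_cases i <;> simp [incidentEdges, pathEdges, pathHead] <;> grind

theorem incidentEdges_right (hn : ∀ i, 0 < n i) : incidentEdges n (2, n 2) =
    ({(1, n 1 - 1), (4, n 4 - 1), (2, n 2 - 1)} : Finset (Fin 5 × ℕ)) := by
  ext ⟨i, j⟩
  fin_cases i <;> simp [incidentEdges, pathEdges, pathHead] <;> grind

theorem exists_isVertexData (hn : ∀ i, 0 < n i) {x : Fin 5 × ℕ}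
    (hx : x ∈ pathEdges n ∨ x = (2, n 2)) :
    ∃ T : Finset (Fin 5 × ℕ), incidentEdges n x = T ∧ IsVertexData n g x T.card (∑ e ∈ T, g e) := by
  rcases hx with hx | rfl
  · obtain ⟨i, _ | j⟩ := x
    · obtain rfl | hi := eq_or_ne i 2
      · refine ⟨_, incidentEdges_left hn, ?_⟩
        convert IsVertexData.left using 1
        · simp
        · simp [leftSum, add_assoc]
      · refine ⟨_, incidentEdges_leaf hi (hn i), ?_⟩
        rw [Finset.card_singleton, Finset.sum_singleton]
        exact .leaf hi
    · refine ⟨_, incidentEdges_inner (e := (i, j)) hx, ?_⟩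
      rw [Finset.card_pair (by simp), Finset.sum_pair (by simp)]
      exact .inner (e := (i, j)) hx
  · refine ⟨_, incidentEdges_right hn, ?_⟩
    convert IsVertexData.right using 1
    · simp
    · simp [rightSum, add_assoc]

theorem IsVertexData.lt_of_degree_lt (hg : IsSpiderLabeling n g) {x x' : Fin 5 × ℕ}
    {d d' m m' : ℕ} (hx : IsVertexData n g x d m) (hx' : IsVertexData n g x' d' m') (hd : d < d') :
    m < m' := by
  cases hx <;> cases hx' <;> try omega
  case leaf.inner k hk e he => exact hg.leaf_lt_innerSum k hk e he
  case leaf.left k hk => exact hg.left_dominates.leaf_lt k hk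
  case leaf.right k hk => exact hg.right_dominates.leaf_lt k hk
  case inner.left e he => exact hg.left_dominates.innerSum_lt e he
  case inner.right e he => exact hg.right_dominates.innerSum_lt e he

theorem IsVertexData.eq_of_sum_eq (hg : IsSpiderLabeling n g) {x x' : Fin 5 × ℕ}
    {d d' m : ℕ} (hx : IsVertexData n g x d m) (hx' : IsVertexData n g x' d' m) : x = x' := by
  have hd : d = d' := le_antisymm
    (not_lt.1 fun h => lt_irrefl m (hx'.lt_of_degree_lt hg hx h))
    (not_lt.1 fun h => lt_irrefl m (hx.lt_of_degree_lt hg hx' h))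
  generalize hm : m = m' at hx'
  cases hx <;> cases hx' <;> try omega
  case leaf.leaf k hk k' hk' => exact hg.bijOn.injOn (hg.pos k) (hg.pos k') hm
  case inner.inner e he e' he' => rw [hg.innerSum_injOn he he' hm]
  case left.left => rfl
  case left.right => exact absurd hm hg.leftSum_ne_rightSum
  case right.left => exact absurd hm.symm hg.leftSum_ne_rightSum
  case right.right => rfl

end VertexData

section Positions

variable {a a' s b b' : ℕ}

/-- The name, as in `pathHead`, of a vertex of a double spider with two legs at each branch
vertex. -/
def spiderPos : DSVert s [a, a'] [b, b'] → Fin 5 × ℕ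
  | Sum.inl k => (2, k)
  | Sum.inr (Sum.inl ⟨i, p⟩) => (![0, 3] i, p.rev)
  | Sum.inr (Sum.inr ⟨i, p⟩) => (![1, 4] i, p.rev)

theorem spiderPos_injective :
    Function.Injective (spiderPos (a := a) (a' := a') (s := s) (b := b) (b' := b')) := by
  rintro (k | ⟨i, k⟩ | ⟨i, k⟩) (l | ⟨j, l⟩ | ⟨j, l⟩) h <;>
    have hk := k.isLt <;> have hl := l.isLt <;> (try fin_cases i) <;> (try fin_cases j) <;>
    simp [spiderPos] at h hk hl ⊢ <;> grind

theorem mem_range_spiderPos {x : Fin 5 × ℕ} :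
    x ∈ Set.range (spiderPos (a := a) (a' := a') (s := s) (b := b) (b' := b')) ↔
      x ∈ pathEdges ![a, b, s, a', b'] ∨ x = (2, s) := by
  constructor
  · rintro ⟨k | ⟨i, k⟩ | ⟨i, k⟩, rfl⟩
    · exact (Nat.lt_succ_iff_lt_or_eq.1 k.isLt).imp id fun h => Prod.ext rfl h
    all_goals
      left
      fin_cases i <;> exact k.rev.isLt
  · rintro (h | rfl)
    · obtain ⟨i, j⟩ := x
      fin_cases i
      · exact ⟨Sum.inr (Sum.inl ⟨0, Fin.rev ⟨j, h⟩⟩),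
          Prod.ext rfl (congrArg Fin.val (Fin.rev_rev _))⟩
      · exact ⟨Sum.inr (Sum.inr ⟨0, Fin.rev ⟨j, h⟩⟩),
          Prod.ext rfl (congrArg Fin.val (Fin.rev_rev _))⟩
      · exact ⟨Sum.inl ⟨j, Nat.lt_succ_of_lt h⟩, rfl⟩
      · exact ⟨Sum.inr (Sum.inl ⟨1, Fin.rev ⟨j, h⟩⟩),
          Prod.ext rfl (congrArg Fin.val (Fin.rev_rev _))⟩
      · exact ⟨Sum.inr (Sum.inr ⟨1, Fin.rev ⟨j, h⟩⟩),
          Prod.ext rfl (congrArg Fin.val (Fin.rev_rev _))⟩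
    · exact ⟨Sum.inl (Fin.last s), rfl⟩

theorem isParentMap_spiderPos : IsParentMap (DoubleSpider s [a, a'] [b, b'])
    spiderPos (pathEdges ![a, b, s, a', b']) (pathHead ![a, b, s, a', b']) where
  injective := spiderPos_injective
  subset_range _ hx := mem_range_spiderPos.2 (Or.inl hx)
  head_mem_range _ hx := mem_range_spiderPos.2 (pathHead_mem hx)
  head_head_ne _ hx _ := pathHead_pathHead_ne hx
  adj_iff := by
    rintro (k | ⟨i, k⟩ | ⟨i, k⟩) (l | ⟨j, l⟩ | ⟨j, l⟩) <;>
      have hk := k.isLt <;> have hl := l.isLt <;> (try fin_cases i) <;> (try fin_cases j) <;>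
      simp [DoubleSpider, spiderPos, pathEdges, pathHead] at hk hl ⊢ <;> grind

theorem HasLabeling.isStronglyAntimagic (h : HasLabeling a a' s b b') :
    IsStronglyAntimagic (DoubleSpider s [a, a'] [b, b']) := by
  obtain ⟨g, hg⟩ := h
  obtain ⟨φ, hφ, hdata⟩ := (isParentMap_spiderPos (a := a) (a' := a') (s := s) (b := b)
    (b' := b')).exists_edge_indexing
  have hvertex (u) : IsVertexData ![a, b, s, a', b'] g (spiderPos u)
      ((DoubleSpider s [a, a'] [b, b']).degree u)
      (vertexSum (DoubleSpider s [a, a'] [b, b']) (g ∘ φ) u) := by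
    obtain ⟨T, hT, h⟩ := exists_isVertexData (g := g) hg.pos
      (mem_range_spiderPos.1 (Set.mem_range_self u))
    obtain ⟨hdeg, hsum⟩ := hdata u T fun x => Set.ext_iff.1 hT.symm x
    rwa [hdeg, hsum]
  have hcard : (DoubleSpider s [a, a'] [b, b']).edgeFinset.card = ∑ i, ![a, b, s, a', b'] i := by
    rw [← ncard_pathEdges, ← hφ.image_eq, hφ.injOn.ncard_image, ← SimpleGraph.coe_edgeFinset,
      Set.ncard_coe_finset]
  refine ⟨g ∘ φ, ?_, fun u v huv => ?_, fun u v => (hvertex u).lt_of_degree_lt hg (hvertex v)⟩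
  · rw [hcard]
    exact hg.bijOn.comp hφ
  · exact spiderPos_injective ((hvertex u).eq_of_sum_eq hg (huv ▸ hvertex v))

end Positions

section Degrees

variable {s : ℕ} {L R : List ℕ}

theorem degree_vL (hs : 1 ≤ s) (hL : ∀ ℓ ∈ L, 1 ≤ ℓ) :
    (DoubleSpider s L R).degree (vL s L R) = L.length + 1 := by
  have hnbr : (DoubleSpider s L R).neighborFinset (vL s L R) =
      insert (Sum.inl ⟨1, by omega⟩) (Finset.univ.image fun i : Fin L.length =>
        Sum.inr (Sum.inl ⟨i, ⟨0, hL _ (L.get_mem i)⟩⟩)) := by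
    ext u
    rw [SimpleGraph.mem_neighborFinset]
    rcases u with k | ⟨i, k⟩ | ⟨i, k⟩ <;>
      simp [DoubleSpider, vL] <;> grind
  rw [← SimpleGraph.card_neighborFinset_eq_degree, hnbr, Finset.card_insert_of_notMem,
    Finset.card_image_of_injective, Finset.card_univ, Fintype.card_fin]
  · intro i j h
    exact (Sigma.mk.inj (Sum.inl.inj (Sum.inr.inj h))).1
  · simp

theorem degree_vR (hs : 1 ≤ s) (hR : ∀ ℓ ∈ R, 1 ≤ ℓ) :
    (DoubleSpider s L R).degree (vR s L R) = R.length + 1 := by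
  have hnbr : (DoubleSpider s L R).neighborFinset (vR s L R) =
      insert (Sum.inl ⟨s - 1, by omega⟩) (Finset.univ.image fun i : Fin R.length =>
        Sum.inr (Sum.inr ⟨i, ⟨0, hR _ (R.get_mem i)⟩⟩)) := by
    ext u
    rw [SimpleGraph.mem_neighborFinset]
    rcases u with k | ⟨i, k⟩ | ⟨i, k⟩ <;>
      simp [DoubleSpider, vR] <;> grind
  rw [← SimpleGraph.card_neighborFinset_eq_degree, hnbr, Finset.card_insert_of_notMem,
    Finset.card_image_of_injective, Finset.card_univ, Fintype.card_fin]
  · intro i j h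
    exact (Sigma.mk.inj (Sum.inr.inj (Sum.inr.inj h))).1
  · simp

end Degrees

/-- Every double spider `DS(L, Pᶜᵒʳᵉ, R)` in which both branch vertices
have degree exactly 3 is strongly antimagic. -/
theorem doubleSpider_deg_three_isStronglyAntimagic (s : ℕ) (hs : 1 ≤ s) (L R : List ℕ)
    (hL : ∀ ℓ ∈ L, 1 ≤ ℓ) (hR : ∀ ℓ ∈ R, 1 ≤ ℓ)
    (hl : (DoubleSpider s L R).degree (vL s L R) = 3)
    (hr : (DoubleSpider s L R).degree (vR s L R) = 3) :
    IsStronglyAntimagic (DoubleSpider s L R) := by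
  rw [degree_vL hs hL] at hl
  rw [degree_vR hs hR] at hr
  obtain ⟨a, a', rfl⟩ := List.length_eq_two.1 (Nat.succ.inj hl)
  obtain ⟨b, b', rfl⟩ := List.length_eq_two.1 (Nat.succ.inj hr)
  exact (hasLabeling (hL a (by simp)) (hL a' (by simp)) hs (hR b (by simp))
    (hR b' (by simp))).isStronglyAntimagic

end
end

section
/- Let DS(L, P^core, R) be a double spider with deg(v_l) > deg(v_r) ≥ 3 such that R contains no path of even length and no odd-length path of length at least 3 (equivalently, every path in R has length exactly 1). Then DS(L, P^core, R) is strongly antimagic. -/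
open Classical

noncomputable section

/-! Every edge gets a class and a time, and the labels list the edges class by class, in order of
time within a class. The times run along the legs at `v_l` from the leaf to `v_l`, then along the
core to `v_r`, and consecutive edges of such a path are alternately low (class `0`) and high
(class `4`), so that the sums at the inner vertices of paths increase with time; a final edge of
class `5` may be put at the end of the core and of legs of odd length. Leaf edges have class at most
`3`, hence leaves have smaller sums than inner vertices. It remains to see that the inner vertices
stay below `v_r`, which holds since essentially every high edge follows a low one, and that `v_r`
stays below `v_l`, which has more leg edges; this is where the parity of the core and the number of
long odd legs matter. -/

section EdgeEnumeration

variable {V ι : Type*} [Fintype ι] {G : SimpleGraph V} {e : ι → Sym2 V}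

/-- The indices of the edges incident to `u`, where `e` lists the edges of a graph. -/
def edgesAt (e : ι → Sym2 V) (u : V) : Finset ι :=
  {x | u ∈ e x}

theorem mem_edgesAt {u : V} {x : ι} : x ∈ edgesAt e u ↔ u ∈ e x := by
  simp [edgesAt]

theorem image_edgesAt_eq_incidenceSet (he : Set.BijOn e Set.univ G.edgeSet) (u : V) :
    e '' edgesAt e u = G.incidenceSet u := by
  ext a
  constructor
  · rintro ⟨x, hx, rfl⟩
    exact ⟨he.mapsTo (Set.mem_univ x), mem_edgesAt.mp hx⟩
  · rintro ⟨ha, hu⟩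
    obtain ⟨x, -, rfl⟩ := he.surjOn ha
    exact ⟨x, mem_edgesAt.mpr hu, rfl⟩

theorem degree_eq_card_edgesAt (he : Set.BijOn e Set.univ G.edgeSet) (u : V)
    [Fintype (G.neighborSet u)] : G.degree u = (edgesAt e u).card := by
  rw [← G.card_incidenceFinset_eq_degree, ← Set.ncard_coe_finset, G.coe_incidenceFinset,
    ← image_edgesAt_eq_incidenceSet he,
    (he.injOn.mono (Set.subset_univ _)).ncard_image, Set.ncard_coe_finset]

variable [Fintype V]

theorem card_edgeFinset_eq_card (he : Set.BijOn e Set.univ G.edgeSet) :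
    G.edgeFinset.card = Fintype.card ι := by
  rw [← Set.ncard_coe_finset, G.coe_edgeFinset, ← he.image_eq,
    he.injOn.ncard_image, Set.ncard_univ, Nat.card_eq_fintype_card]

theorem vertexSum_eq_sum_edgesAt (he : Set.BijOn e Set.univ G.edgeSet) (f : Sym2 V → ℕ) (u : V) :
    vertexSum G f u = ∑ x ∈ edgesAt e u, f (e x) := by
  have himage : G.incidenceFinset u = (edgesAt e u).image e := by
    rw [← Finset.coe_inj, G.coe_incidenceFinset, Finset.coe_image,
      image_edgesAt_eq_incidenceSet he]
  rw [vertexSum, himage, Finset.sum_image (he.injOn.mono (Set.subset_univ _))]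

theorem isStronglyAntimagic_of_bijOn (he : Set.BijOn e Set.univ G.edgeSet) {g : ι → ℕ}
    (hg : Set.BijOn g Set.univ (Set.Icc 1 (Fintype.card ι)))
    (hinj : Function.Injective fun u => ∑ x ∈ edgesAt e u, g x)
    (hdeg : ∀ u v, (edgesAt e u).card < (edgesAt e v).card →
      ∑ x ∈ edgesAt e u, g x < ∑ x ∈ edgesAt e v, g x) :
    IsStronglyAntimagic G := by
  let f : Sym2 V → ℕ := Function.extend e g 0
  have hf : f ∘ e = g := funext fun x => (Set.injOn_univ.mp he.injOn).extend_apply g 0 x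
  have hsum : vertexSum G f = fun u => ∑ x ∈ edgesAt e u, g x := by
    funext u
    simp only [vertexSum_eq_sum_edgesAt he, ← hf, Function.comp_apply]
  refine ⟨f, ?_, hsum ▸ hinj, fun u v huv => ?_⟩
  · rw [card_edgeFinset_eq_card he, ← he.image_eq, ← Set.bijOn_comp_iff he.injOn, hf]
    exact hg
  · rw [degree_eq_card_edgesAt he, degree_eq_card_edgesAt he] at huv
    simpa only [hsum] using hdeg u v huv

end EdgeEnumeration

section KeyRank

variable {ι α : Type*} [Fintype ι] [LinearOrder α] {k : ι → α} {x y : ι}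

/-- The rank of `k x` among the values of the key `k`, counted from `1`. Labelling the edges by the
ranks of their keys reduces comparisons of labels to comparisons of keys. -/
def keyRank (k : ι → α) (x : ι) : ℕ :=
  Finset.card {y | k y ≤ k x}

theorem keyRank_mono (h : k x ≤ k y) : keyRank k x ≤ keyRank k y :=
  Finset.card_le_card fun _ hz => Finset.mem_filter.mpr
    ⟨Finset.mem_univ _, (Finset.mem_filter.mp hz).2.trans h⟩

theorem keyRank_lt_keyRank_iff : keyRank k x < keyRank k y ↔ k x < k y := by
  refine ⟨fun h => lt_of_not_ge fun hyx => (keyRank_mono hyx).not_gt h, fun h => ?_⟩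
  refine Finset.card_lt_card ⟨fun z hz => ?_, fun hsub => ?_⟩
  · simp only [Finset.mem_filter_univ] at hz ⊢
    exact hz.trans h.le
  · simpa [h.not_ge] using @hsub y (by simp)

theorem keyRank_le_keyRank_iff : keyRank k x ≤ keyRank k y ↔ k x ≤ k y := by
  rw [← not_lt, keyRank_lt_keyRank_iff, not_lt]

theorem keyRank_injective (hk : Function.Injective k) : Function.Injective (keyRank k) := by
  intro x y h
  by_contra hne
  rcases lt_or_gt_of_ne (hk.ne hne) with hlt | hlt
  · exact (keyRank_lt_keyRank_iff.mpr hlt).ne h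
  · exact (keyRank_lt_keyRank_iff.mpr hlt).ne' h

theorem one_le_keyRank (k : ι → α) (x : ι) : 1 ≤ keyRank k x :=
  Finset.card_pos.mpr ⟨x, by simp⟩

theorem bijOn_keyRank (hk : Function.Injective k) :
    Set.BijOn (keyRank k) Set.univ (Set.Icc 1 (Fintype.card ι)) := by
  have hmaps : Set.MapsTo (keyRank k) Set.univ (Set.Icc 1 (Fintype.card ι)) :=
    fun x _ => ⟨one_le_keyRank k x, Finset.card_le_univ _⟩
  refine ⟨hmaps, (keyRank_injective hk).injOn, ?_⟩
  rw [← Finset.coe_univ, ← Finset.coe_Icc] at hmaps ⊢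
  exact Finset.surjOn_of_injOn_of_card_le _ hmaps (keyRank_injective hk).injOn (by simp)

theorem card_le_keyRank {s : Finset ι} (h : ∀ y ∈ s, k y ≤ k x) : s.card ≤ keyRank k x :=
  Finset.card_le_card fun y hy => by simpa using h y hy

theorem keyRank_le_card {s : Finset ι} (h : ∀ y, k y ≤ k x → y ∈ s) : keyRank k x ≤ s.card :=
  Finset.card_le_card fun y hy => h y (by simpa using hy)

theorem keyRank_le_add_card {s : Finset ι} {z : ι} (h : ∀ y, k y ≤ k x → k y ≤ k z ∨ y ∈ s) :
    keyRank k x ≤ keyRank k z + s.card := by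
  refine (keyRank_le_card (s := ({y | k y ≤ k z} : Finset ι) ∪ s) fun y hy => ?_).trans
    (Finset.card_union_le _ _)
  simpa using h y hy

end KeyRank

section ClassLabel

variable {ι α : Type*} [Fintype ι] [LinearOrder α] {c : ι → ℕ} {τ : ι → α} {x y x' y' : ι} {m n : ℕ}

/-- The labelling that lists the edges by their class `c`, and by their time `τ` within a class. -/
def classLabel (c : ι → ℕ) (τ : ι → α) : ι → ℕ :=
  keyRank fun x => toLex (c x, τ x)

/-- The number of edges of class at most `m`; these carry the labels `1, …, countLE c m`. -/
def countLE (c : ι → ℕ) (m : ℕ) : ℕ :=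
  Finset.card {x | c x ≤ m}

theorem classLabel_lt_iff :
    classLabel c τ x < classLabel c τ y ↔ c x < c y ∨ c x = c y ∧ τ x < τ y := by
  rw [classLabel, keyRank_lt_keyRank_iff, Prod.Lex.toLex_lt_toLex]

theorem classLabel_le_iff :
    classLabel c τ x ≤ classLabel c τ y ↔ c x < c y ∨ c x = c y ∧ τ x ≤ τ y := by
  rw [classLabel, keyRank_le_keyRank_iff, Prod.Lex.toLex_le_toLex]

theorem bijOn_classLabel (hτ : Function.Injective τ) :
    Set.BijOn (classLabel c τ) Set.univ (Set.Icc 1 (Fintype.card ι)) :=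
  bijOn_keyRank fun _ _ h => hτ (Prod.ext_iff.mp (toLex.injective h)).2

theorem classLabel_le_countLE (h : c x ≤ m) : classLabel c τ x ≤ countLE c m :=
  keyRank_le_card fun y hy => by
    have hcy := Prod.Lex.monotone_fst _ _ hy
    exact Finset.mem_filter.mpr ⟨Finset.mem_univ y, hcy.trans h⟩

theorem countLE_lt_classLabel (h : m < c x) : countLE c m < classLabel c τ x := by
  have hx : x ∉ ({y | c y ≤ m} : Finset ι) := by simpa using h
  rw [countLE, Nat.lt_iff_add_one_le, ← Finset.card_insert_of_notMem hx]
  refine card_le_keyRank fun y hy => ?_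
  rcases Finset.mem_insert.mp hy with rfl | hy
  · exact le_rfl
  · have hcy : c y ≤ m := by simpa using hy
    exact (Prod.Lex.toLex_lt_toLex.mpr (Or.inl (hcy.trans_lt h))).le

theorem countLE_mono (h : m ≤ n) : countLE c m ≤ countLE c n :=
  Finset.card_le_card <| Finset.monotone_filter_right _ fun _ _ hx => hx.trans h

theorem countLE_le_classLabel (h : ∀ y, c y ≤ m → classLabel c τ y ≤ classLabel c τ x) :
    countLE c m ≤ classLabel c τ x :=
  card_le_keyRank fun y hy =>
    (keyRank_le_keyRank_iff (k := fun z => toLex (c z, τ z))).mp (h y (by simpa using hy))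

theorem classLabel_le_add_card {s : Finset ι}
    (h : ∀ z, classLabel c τ z ≤ classLabel c τ x → classLabel c τ z ≤ classLabel c τ y ∨ z ∈ s) :
    classLabel c τ x ≤ classLabel c τ y + s.card :=
  keyRank_le_add_card fun z => by
    simpa only [classLabel, keyRank_le_keyRank_iff] using h z

/-- The pairs of classes that two consecutive edges of a path may have, in order of time: low and
high edges (classes `0` and `4`) alternate, up to a possible final edge of class `5`. -/
inductive LinkClasses : ℕ → ℕ → Prop
  | low_high : LinkClasses 0 4
  | high_low : LinkClasses 4 0
  | high_top : LinkClasses 4 5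

theorem LinkClasses.eq_or (h : LinkClasses m n) :
    m = 0 ∧ n = 4 ∨ m = 4 ∧ n = 0 ∨ m = 4 ∧ n = 5 := by
  cases h <;> simp

/-- The edge `y` follows the edge `x` on a path on which the labels alternate between low and
high. -/
structure IsLink (c : ι → ℕ) (τ : ι → α) (x y : ι) : Prop where
  covBy : τ x ⋖ τ y
  classes : LinkClasses (c x) (c y)

theorem IsLink.countLE_lt_add (h : IsLink c τ x y) :
    countLE c 3 < classLabel c τ x + classLabel c τ y := by
  have hclass : 3 < c x ∨ 3 < c y := by
    rcases h.classes.eq_or with h | h | h <;> omega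
  rcases hclass with h | h
  · exact Nat.lt_add_right _ (countLE_lt_classLabel h)
  · exact Nat.lt_add_left _ (countLE_lt_classLabel h)

/-- Of two links without a top edge the later one has the larger sum, and a link with a top edge
exceeds every link without one. -/
theorem IsLink.add_ne_add_of_lt (h : IsLink c τ x y) (h' : IsLink c τ x' y') (hlt : τ x < τ x') :
    classLabel c τ x + classLabel c τ y ≠ classLabel c τ x' + classLabel c τ y' := by
  have hyx' : τ y ≤ τ x' := h.covBy.ge_of_gt hlt
  have hyy' : τ y < τ y' := hyx'.trans_lt h'.covBy.lt
  have hxy' : τ x < τ y' := hlt.trans h'.covBy.lt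
  have hclass : ∀ {z w}, c z < c w → classLabel c τ z < classLabel c τ w :=
    fun h => classLabel_lt_iff.mpr (Or.inl h)
  have htime : ∀ {z w}, c z = c w → τ z < τ w → classLabel c τ z < classLabel c τ w :=
    fun h ht => classLabel_lt_iff.mpr (Or.inr ⟨h, ht⟩)
  have htime' : ∀ {z w}, c z = c w → τ z ≤ τ w → classLabel c τ z ≤ classLabel c τ w :=
    fun h ht => classLabel_le_iff.mpr (Or.inr ⟨h, ht⟩)
  rcases h.classes.eq_or with ⟨hx, hy⟩ | ⟨hx, hy⟩ | ⟨hx, hy⟩ <;>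
    rcases h'.classes.eq_or with ⟨hx', hy'⟩ | ⟨hx', hy'⟩ | ⟨hx', hy'⟩ <;>
    grind

end ClassLabel

section Criterion

variable {V ι α : Type*} [Fintype ι] [LinearOrder α] {e : ι → Sym2 V}
  {c : ι → ℕ} {τ : ι → α} {u v : V} {x y x' y' : ι}

/-- The sum of the labels `classLabel c τ` around the vertex `u`. -/
def classSum (e : ι → Sym2 V) (c : ι → ℕ) (τ : ι → α) (u : V) : ℕ :=
  ∑ x ∈ edgesAt e u, classLabel c τ x

theorem classSum_of_edgesAt_eq_singleton (h : edgesAt e u = {y}) :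
    classSum e c τ u = classLabel c τ y := by
  rw [classSum, h, Finset.sum_singleton]

variable [DecidableEq ι]

theorem IsLink.classSum_eq (h : IsLink c τ x y) (hu : edgesAt e u = {x, y}) :
    classSum e c τ u = classLabel c τ x + classLabel c τ y := by
  have hne : x ≠ y := ne_of_apply_ne τ h.covBy.ne
  rw [classSum, hu, Finset.sum_pair hne]

/-- The vertex `u` is a leaf on the edge `y`, which has class at most `3`, or an inner vertex of a
path whose later edge is `y`. -/
inductive IsPathVertex (e : ι → Sym2 V) (c : ι → ℕ) (τ : ι → α) (u : V) (y : ι) : Prop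
  | leaf (hu : edgesAt e u = {y}) (hc : c y ≤ 3) : IsPathVertex e c τ u y
  | link (x : ι) (hu : edgesAt e u = {x, y}) (h : IsLink c τ x y) : IsPathVertex e c τ u y

theorem IsPathVertex.eq_of_classSum_eq (hτ : Function.Injective τ) (hu : IsPathVertex e c τ u y)
    (hv : IsPathVertex e c τ v y') (h : classSum e c τ u = classSum e c τ v) : y = y' := by
  rcases hu with ⟨hu, hcu⟩ | ⟨x, hu, hxy⟩ <;> rcases hv with ⟨hv, hcv⟩ | ⟨x', hv, hxy'⟩
  · rw [classSum_of_edgesAt_eq_singleton hu, classSum_of_edgesAt_eq_singleton hv] at h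
    exact (bijOn_classLabel hτ).injOn (Set.mem_univ y) (Set.mem_univ y') h
  · rw [classSum_of_edgesAt_eq_singleton hu, hxy'.classSum_eq hv] at h
    exact absurd h ((classLabel_le_countLE hcu).trans_lt hxy'.countLE_lt_add).ne
  · rw [hxy.classSum_eq hu, classSum_of_edgesAt_eq_singleton hv] at h
    exact absurd h ((classLabel_le_countLE hcv).trans_lt hxy.countLE_lt_add).ne'
  · rw [hxy.classSum_eq hu, hxy'.classSum_eq hv] at h
    rcases lt_trichotomy (τ x) (τ x') with hlt | heq | hlt
    · exact absurd h (hxy.add_ne_add_of_lt hxy' hlt)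
    · exact hτ (hxy.covBy.unique_right (heq ▸ hxy'.covBy))
    · exact absurd h.symm (hxy'.add_ne_add_of_lt hxy hlt)

theorem IsPathVertex.card_and_classSum (hu : IsPathVertex e c τ u y) :
    (edgesAt e u).card = 1 ∧ classSum e c τ u ≤ countLE c 3 ∨
      (edgesAt e u).card = 2 ∧ countLE c 3 < classSum e c τ u := by
  rcases hu with ⟨hu, hcu⟩ | ⟨x, hu, hxy⟩
  · exact Or.inl ⟨by simp [hu], (classSum_of_edgesAt_eq_singleton hu).trans_le
      (classLabel_le_countLE hcu)⟩
  · exact Or.inr ⟨by rw [hu, Finset.card_pair (ne_of_apply_ne τ hxy.covBy.ne)],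
      hxy.countLE_lt_add.trans_eq (hxy.classSum_eq hu).symm⟩

/-- Leaves have sums at most `countLE c 3`, inner vertices of paths have sums between this bound and
the sum at `vr`, and the sum at `vl` is the largest. -/
theorem isStronglyAntimagic_of_classSum [Fintype V] {G : SimpleGraph V}
    (he : Set.BijOn e Set.univ G.edgeSet) (hτ : Function.Injective τ) (lower : ι → V) {vl vr : V}
    (hpath : ∀ u, u ≠ vl → u ≠ vr → ∃ y, u = lower y ∧ IsPathVertex e c τ u y)
    (hdegr : 3 ≤ (edgesAt e vr).card) (hdegl : (edgesAt e vr).card < (edgesAt e vl).card)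
    (hcount : countLE c 3 < classSum e c τ vr)
    (hlink : ∀ x y, IsLink c τ x y → classLabel c τ x + classLabel c τ y < classSum e c τ vr)
    (hsum : classSum e c τ vr < classSum e c τ vl) :
    IsStronglyAntimagic G := by
  have hlt : ∀ {u y}, IsPathVertex e c τ u y → classSum e c τ u < classSum e c τ vr := by
    rintro u y (⟨hu, hcy⟩ | ⟨x, hu, hxy⟩)
    · rw [classSum_of_edgesAt_eq_singleton hu]
      exact (classLabel_le_countLE hcy).trans_lt hcount
    · rw [hxy.classSum_eq hu]
      exact hlink x y hxy
  have hkind : ∀ u, u = vl ∨ u = vr ∨ ∃ y, u = lower y ∧ IsPathVertex e c τ u y :=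
    fun u => by simpa only [or_iff_not_imp_left] using hpath u
  have hinj : ∀ u v, classSum e c τ u = classSum e c τ v → u = v := by
    intro u v huv
    rcases hkind u with rfl | rfl | ⟨y, hy, hu⟩ <;> rcases hkind v with rfl | rfl | ⟨y', hy', hv⟩
    case inr.inr.inr.inr => rw [hy, hy', hu.eq_of_classSum_eq hτ hv huv]
    all_goals grind
  have hdeg : ∀ u v, (edgesAt e u).card < (edgesAt e v).card →
      classSum e c τ u < classSum e c τ v := by
    intro u v huv
    rcases hkind u with rfl | rfl | ⟨y, -, hu⟩ <;> rcases hkind v with rfl | rfl | ⟨y', -, hv⟩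
    all_goals grind [IsPathVertex.card_and_classSum]
  exact isStronglyAntimagic_of_bijOn he (bijOn_classLabel hτ) hinj hdeg

end Criterion

namespace DoubleSpider

section DoubleSpiderEdges

variable {s : ℕ} {L R : List ℕ}

/-- The edges of the legs whose lengths are listed in `L`: `⟨i, j⟩` is the `j`-th edge of the
`i`-th leg, counted from the branch vertex. -/
abbrev LegEdge (L : List ℕ) : Type :=
  (i : Fin L.length) × Fin (L.get i)

/-- The edges of `DS(L, Pᶜᵒʳᵉ, R)`: the edge `a — a + 1` of the core, the edges of the legs in `L`,
and the edges of the legs in `R`. -/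
abbrev DSEdge (s : ℕ) (L R : List ℕ) : Type :=
  Fin s ⊕ (LegEdge L ⊕ LegEdge R)

/-- The end of an edge that is farther from `v_r`; every vertex but `v_r` is the lower end of
exactly one edge. -/
def lowerEnd : DSEdge s L R → DSVert s L R :=
  Sum.map Fin.castSucc id

/-- The end of an edge that is nearer to `v_r`. -/
def upperEnd : DSEdge s L R → DSVert s L R
  | Sum.inl a => Sum.inl a.succ
  | Sum.inr (Sum.inl ⟨i, j⟩) =>
      if (j : ℕ) = 0 then vL s L R else Sum.inr (Sum.inl ⟨i, ⟨j - 1, by omega⟩⟩)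
  | Sum.inr (Sum.inr ⟨i, j⟩) =>
      if (j : ℕ) = 0 then vR s L R else Sum.inr (Sum.inr ⟨i, ⟨j - 1, by omega⟩⟩)

/-- The two ends of an edge. -/
def ends (x : DSEdge s L R) : Sym2 (DSVert s L R) :=
  s(lowerEnd x, upperEnd x)

/-- The distance from `v_r`. -/
def depth : DSVert s L R → ℕ
  | Sum.inl a => s - a
  | Sum.inr (Sum.inl p) => s + p.2 + 1
  | Sum.inr (Sum.inr p) => p.2 + 1

theorem lowerEnd_injective : Function.Injective (lowerEnd : DSEdge s L R → DSVert s L R) :=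
  (Fin.castSucc_injective s).sumMap Function.injective_id

theorem exists_lowerEnd_eq {u : DSVert s L R} (hu : u ≠ vR s L R) : ∃ x, lowerEnd x = u := by
  rcases u with a | p
  · obtain ⟨b, rfl⟩ := Fin.exists_castSucc_eq.mpr fun h => hu (congrArg Sum.inl h)
    exact ⟨Sum.inl b, rfl⟩
  · exact ⟨Sum.inr p, rfl⟩

theorem depth_upperEnd (x : DSEdge s L R) : depth (upperEnd x) + 1 = depth (lowerEnd x) := by
  rcases x with a | ⟨i, j⟩ | ⟨i, j⟩
  · simp only [upperEnd, lowerEnd, Sum.map_inl, depth, Fin.val_succ, Fin.val_castSucc]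
    omega
  all_goals
    simp only [upperEnd, lowerEnd, Sum.map_inr, id]
    split_ifs with hj
    · simp [depth, vL, vR, hj]
    · simp only [depth]
      omega

theorem ends_injective : Function.Injective (ends : DSEdge s L R → Sym2 (DSVert s L R)) := by
  intro x y h
  rcases Sym2.eq_iff.mp h with ⟨hlower, -⟩ | ⟨hxy, hyx⟩
  · exact lowerEnd_injective hlower
  · have hx := depth_upperEnd x
    have hy := depth_upperEnd y
    rw [hxy] at hx
    rw [← hyx] at hy
    omega

theorem adj_lowerEnd_upperEnd (x : DSEdge s L R) :
    (DoubleSpider s L R).Adj (lowerEnd x) (upperEnd x) := by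
  refine (SimpleGraph.fromRel_adj _ _ _).mpr ⟨fun h => ?_, ?_⟩
  · have := depth_upperEnd x
    rw [h] at this
    omega
  · rcases x with a | ⟨i, j⟩ | ⟨i, j⟩
    · simp [lowerEnd, upperEnd]
    all_goals
      simp only [lowerEnd, upperEnd, Sum.map_inr, id]
      split_ifs with hj
      · simp [vL, vR, hj]
      · exact Or.inr ⟨rfl, by simp only; omega⟩

theorem exists_lowerEnd_eq_upperEnd_eq {u v : DSVert s L R} (h : (DoubleSpider s L R).Adj u v)
    (hdepth : depth v ≤ depth u) : ∃ x, lowerEnd x = u ∧ upperEnd x = v := by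
  obtain ⟨hne, h⟩ := (SimpleGraph.fromRel_adj _ _ _).mp h
  rcases u with a | ⟨i, j⟩ | ⟨i, j⟩ <;> rcases v with b | ⟨k, l⟩ | ⟨k, l⟩
  · have hab : (b : ℕ) = a + 1 := by
      simp only [depth] at hdepth
      omega
    exact ⟨Sum.inl ⟨a, by omega⟩, rfl, congrArg Sum.inl (Fin.ext hab.symm)⟩
  · simp only [depth] at hdepth
    omega
  · simp only [or_false] at h
    simp only [depth] at hdepth
    omega
  · simp only [false_or] at h
    refine ⟨Sum.inr (Sum.inl ⟨i, j⟩), rfl, ?_⟩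
    simp [upperEnd, vL, h.2, Fin.ext_iff, -Fin.val_eq_zero_iff, h.1]
  · obtain ⟨rfl, hlj⟩ | ⟨rfl, hjl⟩ := h
    · simp only [depth] at hdepth hlj
      omega
    refine ⟨Sum.inr (Sum.inl ⟨k, j⟩), rfl, ?_⟩
    simp [upperEnd, show (j : ℕ) = l + 1 from hjl]
  · simp at h
  · simp only [false_or] at h
    refine ⟨Sum.inr (Sum.inr ⟨i, j⟩), rfl, ?_⟩
    simp [upperEnd, vR, h.2, Fin.ext_iff, -Fin.val_eq_zero_iff, h.1]
  · simp at h
  · obtain ⟨rfl, hlj⟩ | ⟨rfl, hjl⟩ := h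
    · simp only [depth] at hdepth hlj
      omega
    refine ⟨Sum.inr (Sum.inr ⟨k, j⟩), rfl, ?_⟩
    simp [upperEnd, show (j : ℕ) = l + 1 from hjl]

theorem bijOn_ends : Set.BijOn ends Set.univ (DoubleSpider s L R).edgeSet := by
  refine ⟨fun x _ => adj_lowerEnd_upperEnd x, ends_injective.injOn, fun a => ?_⟩
  induction a with | _ u v
  intro h
  rcases le_total (depth v) (depth u) with hdepth | hdepth
  · obtain ⟨x, rfl, rfl⟩ := exists_lowerEnd_eq_upperEnd_eq h hdepth
    exact ⟨x, Set.mem_univ x, rfl⟩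
  · obtain ⟨x, rfl, rfl⟩ := exists_lowerEnd_eq_upperEnd_eq h.symm hdepth
    exact ⟨x, Set.mem_univ x, Sym2.eq_swap⟩

theorem mem_edgesAt_ends {u : DSVert s L R} {x : DSEdge s L R} :
    x ∈ edgesAt ends u ↔ u = lowerEnd x ∨ u = upperEnd x := by
  rw [mem_edgesAt, ends, Sym2.mem_iff]

theorem edgesAt_core {a b : Fin s} (hab : (b : ℕ) = a + 1) :
    edgesAt ends (Sum.inl b.castSucc : DSVert s L R) = {Sum.inl a, Sum.inl b} := by
  ext (c | ⟨i, j⟩ | ⟨i, j⟩)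
  · simp only [mem_edgesAt_ends, lowerEnd, upperEnd, Sum.map_inl, Finset.mem_insert,
      Finset.mem_singleton, Sum.inl.injEq, Fin.ext_iff, Fin.val_castSucc, Fin.val_succ]
    omega
  all_goals
    simp only [mem_edgesAt_ends, lowerEnd, upperEnd, Sum.map_inr, id]
    split_ifs with hj
    · have hb : b.castSucc ≠ 0 ∧ b.castSucc ≠ Fin.last s := by
        simp only [ne_eq, Fin.ext_iff, Fin.val_castSucc, Fin.val_zero, Fin.val_last]
        omega
      simp [vL, vR, hb.1, hb.2]
    · simp

theorem edgesAt_left {i : Fin L.length} {j k : Fin (L.get i)} (hjk : (k : ℕ) = j + 1) :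
    edgesAt ends (Sum.inr (Sum.inl ⟨i, j⟩) : DSVert s L R) =
      {Sum.inr (Sum.inl ⟨i, k⟩), Sum.inr (Sum.inl ⟨i, j⟩)} := by
  ext (c | ⟨i', l⟩ | ⟨i', l⟩)
  · simp [mem_edgesAt_ends, lowerEnd, upperEnd]
  · simp only [mem_edgesAt_ends, lowerEnd, upperEnd, Sum.map_inr, id]
    by_cases hi : i = i'
    · subst hi
      split_ifs with hl
      · simp only [vL, Sum.inr.injEq, Sum.inl.injEq, Sigma.mk.injEq, heq_eq_eq, Fin.ext_iff,
          true_and, reduceCtorEq, or_false, Finset.mem_insert, Finset.mem_singleton]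
        omega
      · simp only [Sum.inr.injEq, Sum.inl.injEq, Sigma.mk.injEq, heq_eq_eq, Fin.ext_iff,
          true_and, Finset.mem_insert, Finset.mem_singleton]
        omega
    · split_ifs with hl <;> simp [vL, hi, Ne.symm hi]
  · simp only [mem_edgesAt_ends, lowerEnd, upperEnd, Sum.map_inr, id]
    split_ifs with hl <;> simp [vR]

theorem edgesAt_left_last {i : Fin L.length} {j : Fin (L.get i)} (hj : (j : ℕ) + 1 = L.get i) :
    edgesAt ends (Sum.inr (Sum.inl ⟨i, j⟩) : DSVert s L R) = {Sum.inr (Sum.inl ⟨i, j⟩)} := by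
  ext (c | ⟨i', l⟩ | ⟨i', l⟩)
  · simp [mem_edgesAt_ends, lowerEnd, upperEnd]
  · simp only [mem_edgesAt_ends, lowerEnd, upperEnd, Sum.map_inr, id]
    by_cases hi : i = i'
    · subst hi
      have := l.isLt
      split_ifs with hl
      · simp only [vL, Sum.inr.injEq, Sum.inl.injEq, Sigma.mk.injEq, heq_eq_eq, Fin.ext_iff,
          true_and, reduceCtorEq, or_false, Finset.mem_singleton]
        omega
      · simp only [Sum.inr.injEq, Sum.inl.injEq, Sigma.mk.injEq, heq_eq_eq, Fin.ext_iff,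
          true_and, Finset.mem_singleton]
        omega
    · split_ifs with hl <;> simp [vL, hi, Ne.symm hi]
  · simp only [mem_edgesAt_ends, lowerEnd, upperEnd, Sum.map_inr, id]
    split_ifs with hl <;> simp [vR]

theorem edgesAt_right_last {i : Fin R.length} {j : Fin (R.get i)} (hj : (j : ℕ) + 1 = R.get i) :
    edgesAt ends (Sum.inr (Sum.inr ⟨i, j⟩) : DSVert s L R) = {Sum.inr (Sum.inr ⟨i, j⟩)} := by
  ext (c | ⟨i', l⟩ | ⟨i', l⟩)
  · simp [mem_edgesAt_ends, lowerEnd, upperEnd]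
  · simp only [mem_edgesAt_ends, lowerEnd, upperEnd, Sum.map_inr, id]
    split_ifs with hl <;> simp [vL]
  · simp only [mem_edgesAt_ends, lowerEnd, upperEnd, Sum.map_inr, id]
    by_cases hi : i = i'
    · subst hi
      have := l.isLt
      split_ifs with hl
      · simp only [vR, Sum.inr.injEq, Sigma.mk.injEq, heq_eq_eq, Fin.ext_iff,
          true_and, reduceCtorEq, or_false, Finset.mem_singleton]
        omega
      · simp only [Sum.inr.injEq, Sigma.mk.injEq, heq_eq_eq, Fin.ext_iff,
          true_and, Finset.mem_singleton]
        omega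
    · split_ifs with hl <;> simp [vR, hi, Ne.symm hi]

/-- The first edge of a leg, at the branch vertex. -/
def firstEdge (hL : ∀ ℓ ∈ L, 1 ≤ ℓ) (i : Fin L.length) : LegEdge L :=
  ⟨i, 0, hL _ (List.get_mem L i)⟩

theorem mem_image_firstEdge {hL : ∀ ℓ ∈ L, 1 ≤ ℓ} {p : LegEdge L} :
    p ∈ Finset.univ.image (firstEdge hL) ↔ (p.2 : ℕ) = 0 := by
  obtain ⟨i, j⟩ := p
  refine ⟨fun h => ?_, fun h => Finset.mem_image.mpr ⟨i, Finset.mem_univ i, ?_⟩⟩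
  · obtain ⟨k, -, hk⟩ := Finset.mem_image.mp h
    rw [← hk, firstEdge]
  · rw [firstEdge]
    exact congrArg (Sigma.mk i) (Fin.ext h.symm)

theorem firstEdge_injective (hL : ∀ ℓ ∈ L, 1 ≤ ℓ) : Function.Injective (firstEdge hL) :=
  fun _ _ h => congrArg Sigma.fst h

/-- The core edge at `v_l`. -/
def coreFirst (hs : 1 ≤ s) : Fin s :=
  ⟨0, hs⟩

/-- The core edge at `v_r`. -/
def coreLast (hs : 1 ≤ s) : Fin s :=
  ⟨s - 1, Nat.sub_one_lt_of_lt hs⟩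

theorem image_firstEdge_eq_univ (hL : ∀ ℓ ∈ L, 1 ≤ ℓ) (hone : ∀ ℓ ∈ L, ℓ = 1) :
    Finset.univ.image (firstEdge hL) = Finset.univ :=
  Finset.eq_univ_iff_forall.mpr fun p => by
    have hp : L.get p.1 = 1 := hone _ (List.get_mem L p.1)
    exact mem_image_firstEdge.mpr (by omega)

theorem card_legEdge (hone : ∀ ℓ ∈ L, ℓ = 1) : Fintype.card (LegEdge L) = L.length := by
  have hL : ∀ ℓ ∈ L, 1 ≤ ℓ := fun ℓ hℓ => (hone ℓ hℓ).ge
  rw [← Finset.card_univ, ← image_firstEdge_eq_univ hL hone,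
    Finset.card_image_of_injective _ (firstEdge_injective hL), Finset.card_fin]

theorem edgesAt_vL (hs : 1 ≤ s) (hL : ∀ ℓ ∈ L, 1 ≤ ℓ) :
    edgesAt ends (vL s L R) =
      Finset.disjSum {coreFirst hs} (Finset.disjSum (Finset.univ.image (firstEdge hL)) ∅) := by
  ext (c | ⟨i, l⟩ | ⟨i, l⟩)
  · simp only [mem_edgesAt_ends, lowerEnd, upperEnd, Sum.map_inl, vL, coreFirst,
      Finset.inl_mem_disjSum, Finset.mem_singleton, Sum.inl.injEq, Fin.ext_iff, Fin.val_castSucc,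
      Fin.val_succ, Fin.val_zero]
    omega
  · simp only [mem_edgesAt_ends, lowerEnd, upperEnd, Sum.map_inr, id]
    rw [Finset.inr_mem_disjSum, Finset.inl_mem_disjSum, mem_image_firstEdge]
    split_ifs with hl <;> simp [vL, hl]
  · simp only [mem_edgesAt_ends, lowerEnd, upperEnd, Sum.map_inr, id]
    have h0s : (0 : Fin (s + 1)) ≠ Fin.last s := Fin.ne_of_val_ne (Nat.ne_of_lt hs)
    split_ifs with hl <;> simp [vL, vR, h0s]

theorem edgesAt_vR (hs : 1 ≤ s) (hR : ∀ ℓ ∈ R, 1 ≤ ℓ) :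
    edgesAt ends (vR s L R) =
      Finset.disjSum {coreLast hs} (Finset.disjSum ∅ (Finset.univ.image (firstEdge hR))) := by
  ext (c | ⟨i, l⟩ | ⟨i, l⟩)
  · simp only [mem_edgesAt_ends, lowerEnd, upperEnd, Sum.map_inl, vR, coreLast,
      Finset.inl_mem_disjSum, Finset.mem_singleton, Sum.inl.injEq, Fin.ext_iff, Fin.val_castSucc,
      Fin.val_succ, Fin.val_last]
    omega
  · simp only [mem_edgesAt_ends, lowerEnd, upperEnd, Sum.map_inr, id]
    have h0s : (0 : Fin (s + 1)) ≠ Fin.last s := Fin.ne_of_val_ne (Nat.ne_of_lt hs)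
    split_ifs with hl <;> simp [vL, vR, h0s.symm]
  · simp only [mem_edgesAt_ends, lowerEnd, upperEnd, Sum.map_inr, id]
    rw [Finset.inr_mem_disjSum, Finset.inr_mem_disjSum, mem_image_firstEdge]
    split_ifs with hl <;> simp [vR, hl]

theorem card_edgesAt_vL (hs : 1 ≤ s) (hL : ∀ ℓ ∈ L, 1 ≤ ℓ) :
    (edgesAt ends (vL s L R)).card = 1 + L.length := by
  simp [edgesAt_vL hs hL, Finset.card_image_of_injective _ (firstEdge_injective hL)]

theorem card_edgesAt_vR (hs : 1 ≤ s) (hR : ∀ ℓ ∈ R, 1 ≤ ℓ) :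
    (edgesAt ends (vR s L R)).card = 1 + R.length := by
  simp [edgesAt_vR hs hR, Finset.card_image_of_injective _ (firstEdge_injective hR)]

end DoubleSpiderEdges

section Schemes

variable {s : ℕ} {L R : List ℕ}

/-- A leg of odd length at least `3`. -/
def IsLongOdd (ℓ : ℕ) : Prop :=
  ℓ % 2 = 1 ∧ ℓ ≠ 1

/-- The class of the `j`-th edge of a leg in `L` of length `ℓ`: a leg of length `1` has class `2`;
on a longer leg low edges (class `0`) and high edges (class `4`) alternate, starting with a low edge
at the leaf, except that the edge at `v_l` gets class `5` if the leg is chosen to be `top`. -/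
def legClass (top : Prop) (ℓ j : ℕ) : ℕ :=
  if ℓ = 1 then 2 else if j = 0 ∧ top then 5 else if (ℓ - 1 - j) % 2 = 0 then 0 else 4

theorem linkClasses_legClass {top : Prop} {ℓ j : ℕ} (htop : top → IsLongOdd ℓ) (hj : j + 1 < ℓ) :
    LinkClasses (legClass top ℓ (j + 1)) (legClass top ℓ j) := by
  have hℓ : ℓ ≠ 1 := by omega
  simp only [legClass, hℓ, if_false, Nat.add_one_ne_zero, false_and]
  by_cases hjt : j = 0 ∧ top
  · have hodd := (htop hjt.2).1
    rw [if_pos hjt, if_neg (by omega)]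
    exact .high_top
  · rw [if_neg hjt]
    by_cases hpar : (ℓ - 1 - j) % 2 = 0
    · rw [if_pos hpar, if_neg (by omega)]
      exact .high_low
    · rw [if_neg hpar, if_pos (by omega)]
      exact .low_high

/-- The choices in the construction of a labelling of a double spider: the classes of the core
edges, a set of long odd legs in `L` whose edge at `v_l` is moved to the top class, and one
distinguished leg edge at `v_r`. -/
structure Scheme (s : ℕ) (L R : List ℕ) where
  core : ℕ → ℕ
  top : Set (Fin L.length)
  last : LegEdge R
  isLongOdd_of_mem_top : ∀ i ∈ top, IsLongOdd (L.get i)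
  core_eq_or : ∀ a, core a = 0 ∨ core a = 4 ∨ core a = 5
  linkClasses_core : ∀ a, a + 1 < s → LinkClasses (core a) (core (a + 1))

/-- The time of an edge: the legs in `L` are traversed one after another from the leaf to `v_l`,
then the core from `v_l` to `v_r`, then the legs in `R`. -/
def time : DSEdge s L R → ℕ ×ₗ ℕ
  | Sum.inl a => toLex (L.length, (a : ℕ))
  | Sum.inr (Sum.inl p) => toLex ((p.1 : ℕ), L.get p.1 - 1 - p.2)
  | Sum.inr (Sum.inr p) => toLex (L.length + 1 + p.1, (p.2 : ℕ))

theorem time_injective : Function.Injective (time : DSEdge s L R → ℕ ×ₗ ℕ) := by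
  rintro (a | ⟨i, j⟩ | ⟨i, j⟩) (b | ⟨k, l⟩ | ⟨k, l⟩) h <;>
    simp only [time, EmbeddingLike.apply_eq_iff_eq, Prod.mk.injEq] at h
  · rw [Fin.ext h.2]
  · omega
  · omega
  · omega
  · obtain rfl := Fin.ext h.1
    rw [show j = l from Fin.ext (by omega)]
  · omega
  · omega
  · omega
  · obtain rfl : i = k := Fin.ext (by omega)
    rw [Fin.ext h.2]

theorem covBy_toLex {m n n' : ℕ} (h : n' = n + 1) :
    (toLex (m, n) : ℕ ×ₗ ℕ) ⋖ toLex (m, n') :=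
  Prod.Lex.toLex_covBy_toLex_iff.mpr (Or.inl ⟨rfl, Order.covBy_iff_add_one_eq.mpr h.symm⟩)

namespace Scheme

variable (σ : Scheme s L R)

/-- The class of an edge. The classes are: `0` low edges; `1` leg edges at `v_r`; `2` legs of length
`1` at `v_l`; `3` the distinguished leg edge at `v_r`; `4` high edges; `5` top edges. -/
def edgeClass : DSEdge s L R → ℕ
  | Sum.inl a => σ.core a
  | Sum.inr (Sum.inl p) => legClass (p.1 ∈ σ.top) (L.get p.1) p.2
  | Sum.inr (Sum.inr p) => if p = σ.last then 3 else 1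

theorem isLink_core {a b : Fin s} (hab : (b : ℕ) = a + 1) :
    IsLink σ.edgeClass time (Sum.inl a) (Sum.inl b) where
  covBy := covBy_toLex hab
  classes := by
    have h := σ.linkClasses_core a (hab ▸ b.isLt)
    rwa [← hab] at h

theorem isLink_left {i : Fin L.length} {j k : Fin (L.get i)} (hjk : (k : ℕ) = j + 1) :
    IsLink σ.edgeClass time (Sum.inr (Sum.inl ⟨i, k⟩)) (Sum.inr (Sum.inl ⟨i, j⟩)) where
  covBy := covBy_toLex (by simp only; omega)
  classes := by
    have hj : (j : ℕ) + 1 < L.get i := hjk ▸ k.isLt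
    simpa only [edgeClass, hjk] using linkClasses_legClass (σ.isLongOdd_of_mem_top i) hj

theorem isPathVertex_lowerEnd (hone : ∀ ℓ ∈ R, ℓ = 1) {y : DSEdge s L R}
    (hy : lowerEnd y ≠ vL s L R) : IsPathVertex ends σ.edgeClass time (lowerEnd y) y := by
  rcases y with b | ⟨i, j⟩ | ⟨i, j⟩
  · have hb : (b : ℕ) ≠ 0 := fun h => hy (congrArg Sum.inl (Fin.ext h))
    obtain ⟨a, hab⟩ : ∃ a : Fin s, (b : ℕ) = a + 1 := ⟨⟨b - 1, by omega⟩, by simp only; omega⟩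
    exact .link _ (edgesAt_core hab) (σ.isLink_core hab)
  · by_cases hj : (j : ℕ) + 1 = L.get i
    · refine .leaf (edgesAt_left_last hj) ?_
      simp only [edgeClass, legClass]
      split_ifs <;> omega
    · exact .link _ (edgesAt_left (k := ⟨j + 1, by omega⟩) rfl) (σ.isLink_left rfl)
  · have hi : R.get i = 1 := hone _ (List.get_mem R i)
    refine .leaf (edgesAt_right_last (by omega)) ?_
    simp only [edgeClass]
    split_ifs <;> omega

end Scheme

end Schemes

section SumBounds

variable {κ : Type*} [Fintype κ] {f : κ → ℕ} {m K : ℕ}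

theorem sum_add_mul_le_sum (A : Finset κ) (hm : A.card + m ≤ Fintype.card κ)
    (hK : ∀ i ∉ A, K ≤ f i) : ∑ i ∈ A, f i + m * K ≤ ∑ i, f i := by
  rw [← Finset.sum_add_sum_compl A f]
  gcongr
  calc m * K ≤ Aᶜ.card * K := by
        gcongr
        rw [Finset.card_compl]
        omega
    _ ≤ ∑ i ∈ Aᶜ, f i := by
        simpa using Finset.card_nsmul_le_sum Aᶜ f K fun i hi => hK i (Finset.mem_compl.mp hi)

theorem sum_le_sum_add_mul (A : Finset κ) (hm : Fintype.card κ ≤ A.card + m)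
    (hK : ∀ i ∉ A, f i ≤ K) : ∑ i, f i ≤ ∑ i ∈ A, f i + m * K := by
  rw [← Finset.sum_add_sum_compl A f]
  gcongr
  calc ∑ i ∈ Aᶜ, f i ≤ Aᶜ.card * K := by
        simpa using Finset.sum_le_card_nsmul Aᶜ f K fun i hi => hK i (Finset.mem_compl.mp hi)
    _ ≤ m * K := by
        gcongr
        rw [Finset.card_compl]
        omega

end SumBounds

namespace Scheme

variable {s : ℕ} {L R : List ℕ} (σ : Scheme s L R) (hs : 1 ≤ s) (hL : ∀ ℓ ∈ L, 1 ≤ ℓ)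

/-- The label of an edge under a scheme. -/
abbrev label (x : DSEdge s L R) : ℕ :=
  classLabel σ.edgeClass time x

/-- The number of edges of class at most `m`. -/
abbrev count (m : ℕ) : ℕ :=
  countLE σ.edgeClass m

/-- The label of the edge at `v_l` of the `i`-th leg in `L`. -/
abbrev legLabel (i : Fin L.length) : ℕ :=
  σ.label (Sum.inr (Sum.inl (firstEdge hL i)))

/-- The label of the core edge at `v_l`. -/
abbrev firstLabel : ℕ :=
  σ.label (Sum.inl (coreFirst hs))

/-- The label of the core edge at `v_r`. -/
abbrev lastLabel : ℕ :=
  σ.label (Sum.inl (coreLast hs))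

theorem classSum_vL : classSum ends σ.edgeClass time (vL s L R) =
    σ.firstLabel hs + ∑ i, σ.legLabel hL i := by
  rw [classSum, edgesAt_vL hs hL, Finset.sum_disjSum, Finset.sum_disjSum, Finset.sum_singleton,
    Finset.sum_empty, Finset.sum_image (firstEdge_injective hL).injOn, add_zero]

theorem classSum_vR (hone : ∀ ℓ ∈ R, ℓ = 1) : classSum ends σ.edgeClass time (vR s L R) =
    σ.lastLabel hs + ∑ p, σ.label (Sum.inr (Sum.inr p)) := by
  have hR : ∀ ℓ ∈ R, 1 ≤ ℓ := fun ℓ hℓ => (hone ℓ hℓ).ge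
  rw [classSum, edgesAt_vR hs hR, image_firstEdge_eq_univ hR hone, Finset.sum_disjSum,
    Finset.sum_disjSum, Finset.sum_singleton, Finset.sum_empty, zero_add]

theorem edgeClass_left_ne (p : LegEdge L) :
    σ.edgeClass (Sum.inr (Sum.inl p)) ≠ 1 ∧ σ.edgeClass (Sum.inr (Sum.inl p)) ≠ 3 := by
  simp only [edgeClass, legClass]
  split_ifs <;> simp

theorem edgeClass_last : σ.edgeClass (Sum.inr (Sum.inr σ.last)) = 3 :=
  if_pos rfl

theorem edgeClass_right_of_ne {p : LegEdge R} (hp : p ≠ σ.last) :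
    σ.edgeClass (Sum.inr (Sum.inr p)) = 1 :=
  if_neg hp

theorem eq_last_of_edgeClass_eq_three {x : DSEdge s L R} (hx : σ.edgeClass x = 3) :
    x = Sum.inr (Sum.inr σ.last) := by
  rcases x with a | p | p
  · have := σ.core_eq_or a
    simp only [edgeClass] at hx
    omega
  · exact absurd hx (σ.edgeClass_left_ne p).2
  · by_contra hp
    rw [σ.edgeClass_right_of_ne fun h => hp (by rw [h])] at hx
    omega

theorem count_three_le_label_last : σ.count 3 ≤ σ.label (Sum.inr (Sum.inr σ.last)) := by
  refine countLE_le_classLabel fun y hy => ?_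
  rcases hy.lt_or_eq with hlt | heq
  · exact classLabel_le_iff.mpr (Or.inl (hlt.trans_eq σ.edgeClass_last.symm))
  · rw [σ.eq_last_of_edgeClass_eq_three heq]

theorem count_three_le : σ.count 3 ≤ σ.count 2 + 1 := by
  have hsub : ({x | σ.edgeClass x ≤ 3} : Finset (DSEdge s L R)) ⊆
      insert (Sum.inr (Sum.inr σ.last)) ({x | σ.edgeClass x ≤ 2} : Finset (DSEdge s L R)) := by
    intro x hx
    simp only [Finset.mem_insert, Finset.mem_filter_univ] at hx ⊢
    rcases hx.lt_or_eq with hlt | heq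
    · exact Or.inr (by omega)
    · exact Or.inl (σ.eq_last_of_edgeClass_eq_three heq)
  exact (Finset.card_le_card hsub).trans (Finset.card_insert_le _ _)

theorem count_three_add_count_zero_lt_sum_right (hR : 2 ≤ Fintype.card (LegEdge R)) :
    σ.count 3 + σ.count 0 < ∑ p, σ.label (Sum.inr (Sum.inr p)) := by
  have hsum := sum_add_mul_le_sum (f := fun p => σ.label (Sum.inr (Sum.inr p))) (m := 1)
    (K := σ.count 0 + 1) {σ.last} (by simpa using hR) fun p hp =>
      countLE_lt_classLabel (by rw [σ.edgeClass_right_of_ne (by simpa using hp)]; simp)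
  have := σ.count_three_le_label_last
  simp only [Finset.sum_singleton] at hsum
  omega

theorem sum_right_le : ∑ p, σ.label (Sum.inr (Sum.inr p)) ≤
    σ.count 3 + (Fintype.card (LegEdge R) - 1) * σ.count 1 := by
  have hsum := sum_le_sum_add_mul (f := fun p => σ.label (Sum.inr (Sum.inr p)))
    (m := Fintype.card (LegEdge R) - 1) (K := σ.count 1) {σ.last}
    (by rw [Finset.card_singleton]; omega) fun p hp =>
      classLabel_le_countLE (by rw [σ.edgeClass_right_of_ne (by simpa using hp)])
  have : σ.label (Sum.inr (Sum.inr σ.last)) ≤ σ.count 3 :=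
    classLabel_le_countLE σ.edgeClass_last.le
  simp only [Finset.sum_singleton] at hsum
  omega

theorem isStronglyAntimagic (hone : ∀ ℓ ∈ R, ℓ = 1) (hR : 2 ≤ R.length)
    (hLR : R.length < L.length)
    (hlink : ∀ x y, IsLink σ.edgeClass time x y →
      σ.label x + σ.label y ≤ σ.lastLabel hs + (σ.count 3 + σ.count 0))
    (hsum : σ.lastLabel hs + (σ.count 3 + (R.length - 1) * σ.count 1) <
      σ.firstLabel hs + ∑ i, σ.legLabel hL i) :
    IsStronglyAntimagic (DoubleSpider s L R) := by
  have hcard := card_legEdge hone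
  have hlower := σ.count_three_add_count_zero_lt_sum_right (hR.trans_eq hcard.symm)
  have hupper := σ.sum_right_le
  have hvL := σ.classSum_vL hs hL
  have hvR := σ.classSum_vR hs hone
  have hdegL := card_edgesAt_vL (R := R) hs hL
  have hdegR := card_edgesAt_vR (L := L) hs fun ℓ hℓ => (hone ℓ hℓ).ge
  rw [hcard] at hupper
  simp only [label, count, legLabel, firstLabel, lastLabel] at hlower hupper hvL hvR hlink hsum
  refine isStronglyAntimagic_of_classSum bijOn_ends time_injective lowerEnd
    (c := σ.edgeClass) (vl := vL s L R) (vr := vR s L R) (fun u hul hur => ?_)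
    (by omega) (by omega) (by omega) (fun x y hxy => ?_) (by omega)
  · obtain ⟨y, rfl⟩ := exists_lowerEnd_eq hur
    exact ⟨y, rfl, σ.isPathVertex_lowerEnd hone hul⟩
  · have := hlink x y hxy
    omega

end Scheme

section NextEdge

variable {s : ℕ} {L R : List ℕ}

/-- The edge that follows a given edge on the way to `v_r`, where every leg in `L` is continued by
the core and the core is closed up to a cycle; edges at `v_r` outside the core are fixed. -/
def nextEdge (hs : 1 ≤ s) : DSEdge s L R → DSEdge s L R
  | Sum.inl a => Sum.inl ⟨(a + 1) % s, Nat.mod_lt _ hs⟩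
  | Sum.inr (Sum.inl ⟨i, j⟩) =>
      if (j : ℕ) = 0 then Sum.inl (coreFirst hs) else Sum.inr (Sum.inl ⟨i, ⟨j - 1, by omega⟩⟩)
  | Sum.inr (Sum.inr p) => Sum.inr (Sum.inr p)

theorem nextEdge_firstEdge (hs : 1 ≤ s) (hL : ∀ ℓ ∈ L, 1 ≤ ℓ) (i : Fin L.length) :
    nextEdge hs (Sum.inr (Sum.inl (firstEdge hL i)) : DSEdge s L R) = Sum.inl (coreFirst hs) := by
  simp only [nextEdge, firstEdge, if_true]

theorem nextEdge_coreLast (hs : 1 ≤ s) :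
    nextEdge hs (Sum.inl (coreLast hs) : DSEdge s L R) = Sum.inl (coreFirst hs) :=
  congrArg Sum.inl (Fin.ext (by simp [coreFirst, coreLast, Nat.sub_add_cancel hs]))

namespace Scheme

variable (σ : Scheme s L R) (hs : 1 ≤ s)

theorem exists_low_nextEdge_eq {x : DSEdge s L R} (hx : σ.edgeClass x = 4)
    (hne : x ≠ Sum.inl (coreFirst hs)) : ∃ y, σ.edgeClass y = 0 ∧ nextEdge hs y = x := by
  rcases x with b | ⟨i, j⟩ | p
  · have hb : (b : ℕ) ≠ 0 := fun h => hne (congrArg Sum.inl (Fin.ext h))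
    obtain ⟨a, hab⟩ : ∃ a : Fin s, (b : ℕ) = a + 1 := ⟨⟨b - 1, by omega⟩, by simp only; omega⟩
    refine ⟨Sum.inl a, ?_, congrArg Sum.inl (Fin.ext ?_)⟩
    · rcases (σ.isLink_core hab).classes.eq_or with h | h | h <;> omega
    · simp only [← hab, Nat.mod_eq_of_lt b.isLt]
  · have hj : (j : ℕ) + 1 < L.get i := by
      simp only [edgeClass, legClass] at hx
      split_ifs at hx <;> omega
    refine ⟨Sum.inr (Sum.inl ⟨i, ⟨j + 1, hj⟩⟩), ?_, by simp [nextEdge]⟩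
    rcases (σ.isLink_left (k := ⟨j + 1, hj⟩) (j := j) rfl).classes.eq_or with h | h | h <;> omega
  · simp only [edgeClass] at hx
    split_ifs at hx <;> omega

/-- Every high edge, with the possible exception of the core edge at `v_l`, follows a low edge. -/
theorem count_four_le (hfirst : σ.edgeClass (Sum.inl (coreFirst hs)) = 4 →
      ∃ y, σ.edgeClass y = 0 ∧ nextEdge hs y = Sum.inl (coreFirst hs)) :
    σ.count 4 ≤ σ.count 3 + σ.count 0 := by
  have hsub : ({x | σ.edgeClass x ≤ 4} : Finset (DSEdge s L R)) ⊆
      ({x | σ.edgeClass x ≤ 3} : Finset (DSEdge s L R)) ∪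
        ({x | σ.edgeClass x ≤ 0} : Finset (DSEdge s L R)).image (nextEdge hs) := by
    intro x hx
    simp only [Finset.mem_union, Finset.mem_image, Finset.mem_filter_univ,
      Nat.le_zero] at hx ⊢
    rcases hx.lt_or_eq with hlt | heq
    · exact Or.inl (by omega)
    · right
      by_cases hne : x = Sum.inl (coreFirst hs)
      · exact hne ▸ hfirst (hne ▸ heq)
      · exact σ.exists_low_nextEdge_eq hs heq hne
  exact (Finset.card_le_card hsub).trans <| (Finset.card_union_le _ _).trans <|
    Nat.add_le_add_left Finset.card_image_le _

theorem lastLabel_le_firstLabel_add (hfirst : σ.edgeClass (Sum.inl (coreFirst hs)) = 4)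
    (hlast : σ.edgeClass (Sum.inl (coreLast hs)) = 4) :
    σ.lastLabel hs ≤ σ.firstLabel hs + σ.count 0 := by
  refine (classLabel_le_add_card (y := Sum.inl (coreFirst hs))
    (s := ({x | σ.edgeClass x ≤ 0} : Finset (DSEdge s L R)).image (nextEdge hs))
    fun z hz => ?_).trans (Nat.add_le_add_left Finset.card_image_le _)
  rw [Finset.mem_image, classLabel_le_iff, hfirst]
  rw [classLabel_le_iff, hlast] at hz
  rcases hz with hlt | ⟨heq, -⟩
  · exact Or.inl (Or.inl hlt)
  by_cases hne : z = Sum.inl (coreFirst hs)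
  · exact Or.inl (Or.inr ⟨heq, hne ▸ le_rfl⟩)
  · obtain ⟨y, hy, hyz⟩ := σ.exists_low_nextEdge_eq hs heq hne
    exact Or.inr ⟨y, by simpa using hy, hyz⟩

theorem label_le_lastLabel {x : DSEdge s L R} (hone : σ.edgeClass x ≠ 1)
    (hthree : σ.edgeClass x ≠ 3)
    (hlast : σ.edgeClass x ≤ σ.edgeClass (Sum.inl (coreLast hs))) :
    σ.label x ≤ σ.lastLabel hs := by
  refine classLabel_le_iff.mpr (hlast.lt_or_eq.imp_right fun heq => ⟨heq, ?_⟩)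
  rcases x with a | p | p
  · exact Prod.Lex.toLex_le_toLex.mpr (Or.inr ⟨rfl, Nat.le_sub_one_of_lt a.isLt⟩)
  · exact (Prod.Lex.toLex_lt_toLex.mpr (Or.inl p.1.isLt)).le
  · simp only [edgeClass] at hone hthree
    split_ifs at hone hthree <;> omega

theorem label_add_label_le_lastLabel_add_count_four {x y : DSEdge s L R}
    (htop : ∀ z, σ.edgeClass z = 5 → σ.edgeClass (Sum.inl (coreLast hs)) = 5)
    (h : IsLink σ.edgeClass time x y) :
    σ.label x + σ.label y ≤ σ.lastLabel hs + σ.count 4 := by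
  have hle_count : ∀ {z}, σ.edgeClass z = 4 → σ.label z ≤ σ.count 4 :=
    fun hz => classLabel_le_countLE hz.le
  have hle_last : ∀ {z}, σ.edgeClass z = 0 ∨ σ.edgeClass z = 5 → σ.label z ≤ σ.lastLabel hs :=
    fun {z} hz => σ.label_le_lastLabel hs (by omega) (by omega) (by have := htop z; omega)
  rcases h.classes.eq_or with ⟨hx, hy⟩ | ⟨hx, hy⟩ | ⟨hx, hy⟩
  · exact Nat.add_le_add (hle_last (Or.inl hx)) (hle_count hy)
  · exact (Nat.add_comm _ _).trans_le (Nat.add_le_add (hle_last (Or.inl hy)) (hle_count hx))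
  · exact (Nat.add_comm _ _).trans_le (Nat.add_le_add (hle_last (Or.inr hy)) (hle_count hx))

theorem label_add_label_le_lastLabel_add_count_zero {x y : DSEdge s L R}
    (htop : ∀ z, σ.edgeClass z ≠ 5) (hlast : σ.edgeClass (Sum.inl (coreLast hs)) = 4)
    (h : IsLink σ.edgeClass time x y) :
    σ.label x + σ.label y ≤ σ.lastLabel hs + σ.count 0 := by
  have hle_count : ∀ {z}, σ.edgeClass z = 0 → σ.label z ≤ σ.count 0 :=
    fun hz => classLabel_le_countLE hz.le
  have hle_last : ∀ {z}, σ.edgeClass z = 4 → σ.label z ≤ σ.lastLabel hs :=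
    fun hz => σ.label_le_lastLabel hs (by omega) (by omega) (by omega)
  rcases h.classes.eq_or with ⟨hx, hy⟩ | ⟨hx, hy⟩ | ⟨-, hy⟩
  · exact (Nat.add_comm _ _).trans_le (Nat.add_le_add (hle_last hy) (hle_count hx))
  · exact Nat.add_le_add (hle_last hx) (hle_count hy)
  · exact absurd hy (htop y)

end Scheme

end NextEdge

section FirstEdges

namespace Scheme

variable {s : ℕ} {L R : List ℕ} (σ : Scheme s L R) (hs : 1 ≤ s) (hL : ∀ ℓ ∈ L, 1 ≤ ℓ)

theorem edgeClass_firstEdge_of_mem_top {i : Fin L.length} (hi : i ∈ σ.top) :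
    σ.edgeClass (Sum.inr (Sum.inl (firstEdge hL i))) = 5 := by
  have h := (σ.isLongOdd_of_mem_top i hi).2
  simp only [edgeClass, firstEdge, legClass, h, hi, if_false, and_self, if_true]

theorem edgeClass_firstEdge_of_notMem_top {i : Fin L.length} (hodd : IsLongOdd (L.get i))
    (hi : i ∉ σ.top) : σ.edgeClass (Sum.inr (Sum.inl (firstEdge hL i))) = 0 := by
  have hpar : (L.get i - 1 - 0) % 2 = 0 := by have := hodd.1; omega
  simp only [edgeClass, firstEdge, legClass, hodd.2, hi, and_false, hpar, if_false, if_true]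

theorem two_le_edgeClass_firstEdge {i : Fin L.length} (hi : IsLongOdd (L.get i) → i ∈ σ.top) :
    2 ≤ σ.edgeClass (Sum.inr (Sum.inl (firstEdge hL i))) := by
  have hpos := hL _ (List.get_mem L i)
  by_cases hℓ : L.get i = 1
  · simp only [edgeClass, firstEdge, legClass, hℓ, if_true, le_rfl]
  by_cases htop : i ∈ σ.top
  · exact (σ.edgeClass_firstEdge_of_mem_top hL htop).symm ▸ by decide
  · have heven : (L.get i - 1 - 0) % 2 ≠ 0 := fun h => htop (hi ⟨by omega, hℓ⟩)
    simp only [edgeClass, firstEdge, legClass, hℓ, htop, and_false, heven, if_false]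
    decide

theorem count_one_lt_legLabel {i : Fin L.length} (hi : IsLongOdd (L.get i) → i ∈ σ.top) :
    σ.count 1 < σ.legLabel hL i :=
  countLE_lt_classLabel (σ.two_le_edgeClass_firstEdge hL hi)

theorem count_two_le_legLabel {i : Fin L.length} (hi : IsLongOdd (L.get i) → i ∈ σ.top)
    (hmax : ∀ k, L.get k = 1 → σ.legLabel hL k ≤ σ.legLabel hL i) :
    σ.count 2 ≤ σ.legLabel hL i := by
  refine countLE_le_classLabel fun y hy => ?_
  rcases (hy.trans (σ.two_le_edgeClass_firstEdge hL hi)).lt_or_eq with hlt | heq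
  · exact classLabel_le_iff.mpr (Or.inl hlt)
  have hy : σ.edgeClass y = 2 := hy.antisymm (heq ▸ σ.two_le_edgeClass_firstEdge hL hi)
  rcases y with a | ⟨k, j⟩ | p
  · have := σ.core_eq_or a
    simp only [edgeClass] at hy
    omega
  · have hk : L.get k = 1 := by
      simp only [edgeClass, legClass] at hy
      split_ifs at hy <;> first | assumption | omega
    obtain rfl : j = ⟨0, hL _ (List.get_mem L k)⟩ := Fin.ext (by simp only; omega)
    exact hmax k hk
  · simp only [edgeClass] at hy
    split_ifs at hy <;> omega

theorem lastLabel_le_legLabel_add_one {i : Fin L.length} (hi : i ∈ σ.top)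
    (hlast : σ.edgeClass (Sum.inl (coreLast hs)) = 5)
    (hmax : ∀ k, σ.legLabel hL k ≤ σ.legLabel hL i) :
    σ.lastLabel hs ≤ σ.legLabel hL i + 1 := by
  refine classLabel_le_add_card (s := {Sum.inl (coreLast hs)}) fun z hz => ?_
  rw [classLabel_le_iff, hlast] at hz
  rcases hz with hlt | ⟨heq, -⟩
  · exact Or.inl (classLabel_le_iff.mpr
      (Or.inl (hlt.trans_eq (σ.edgeClass_firstEdge_of_mem_top hL hi).symm)))
  rcases z with a | ⟨k, j⟩ | p
  · have ha : ¬(a : ℕ) + 1 < s := fun ha => by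
      simp only [edgeClass] at heq
      rcases (σ.linkClasses_core a ha).eq_or with h | h | h <;> omega
    refine Or.inr (Finset.mem_singleton.mpr (congrArg Sum.inl (Fin.ext ?_)))
    simp only [coreLast]
    omega
  · have hj : (j : ℕ) = 0 := by
      simp only [edgeClass, legClass] at heq
      split_ifs at heq <;> omega
    obtain rfl : j = ⟨0, hL _ (List.get_mem L k)⟩ := Fin.ext hj
    exact Or.inl (hmax k)
  · simp only [edgeClass] at heq
    split_ifs at heq <;> omega

theorem one_lt_firstLabel {i : Fin L.length} (hi : i ∈ σ.top) : 1 < σ.firstLabel hs := by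
  have hodd := σ.isLongOdd_of_mem_top i hi
  let leaf : DSEdge s L R := Sum.inr (Sum.inl ⟨i, L.get i - 1, by have := hodd.1; omega⟩)
  have hleaf : σ.edgeClass leaf = 0 := by
    have hpos : L.get i - 1 ≠ 0 := by have := hodd.1; have := hodd.2; omega
    simp only [leaf, edgeClass, legClass, hodd.2, hpos, false_and, Nat.sub_self, Nat.zero_mod,
      if_false, if_true]
  have hlt : σ.label leaf < σ.firstLabel hs := by
    rw [classLabel_lt_iff, hleaf]
    exact (Nat.eq_zero_or_pos _).symm.imp_right fun h =>
      ⟨h.symm, Prod.Lex.toLex_lt_toLex.mpr (Or.inl i.isLt)⟩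
  exact (one_le_keyRank _ _).trans_lt hlt

theorem exists_mem_top_forall_legLabel_le {i₀ : Fin L.length} (hi₀ : i₀ ∈ σ.top) :
    ∃ i ∈ σ.top, ∀ k, σ.legLabel hL k ≤ σ.legLabel hL i := by
  have : Nonempty (Fin L.length) := ⟨i₀⟩
  obtain ⟨i, hmax⟩ := Finite.exists_max (σ.legLabel hL)
  refine ⟨i, ?_, hmax⟩
  have hclass : 5 ≤ σ.edgeClass (Sum.inr (Sum.inl (firstEdge hL i))) := by
    rw [← σ.edgeClass_firstEdge_of_mem_top hL hi₀]
    exact (classLabel_le_iff.mp (hmax i₀)).elim le_of_lt fun h => h.1.le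
  simp only [edgeClass, legClass] at hclass
  split_ifs at hclass with hone htop
  · omega
  · exact htop.2
  · omega
  · omega

end Scheme

end FirstEdges

section Cases

variable {s : ℕ} {L R : List ℕ}

namespace Scheme

/-- The scheme in which the core alternates between high and low edges, starting with a high edge at
`v_l`, and no leg in `L` has a top edge. -/
def alternating (s : ℕ) (L : List ℕ) (last : LegEdge R) : Scheme s L R where
  core a := if a % 2 = 0 then 4 else 0
  top := ∅
  last := last
  isLongOdd_of_mem_top _ h := h.elim
  core_eq_or a := by split_ifs <;> simp
  linkClasses_core a _ := by
    rcases Nat.mod_two_eq_zero_or_one a with h | h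
    · simpa [h, Nat.succ_mod_two_eq_one_iff.mpr h] using LinkClasses.high_low
    · simpa [h, Nat.succ_mod_two_eq_zero_iff.mpr h] using LinkClasses.low_high

/-- The scheme in which the core ends with a top edge at `v_r` and alternates between high and low
edges before it, and the legs in `top` have a top edge. -/
def topped (s : ℕ) (last : LegEdge R) (top : Set (Fin L.length))
    (htop : ∀ i ∈ top, IsLongOdd (L.get i)) : Scheme s L R where
  core a := if a + 1 = s then 5 else if (s - a) % 2 = 0 then 4 else 0
  top := top
  last := last
  isLongOdd_of_mem_top := htop
  core_eq_or a := by split_ifs <;> simp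
  linkClasses_core a ha := by
    rw [if_neg ha.ne]
    by_cases hlast : a + 1 + 1 = s
    · rw [if_pos hlast, if_pos (by omega)]
      exact .high_top
    · rw [if_neg hlast]
      by_cases hpar : (s - a) % 2 = 0
      · rw [if_pos hpar, if_neg (by omega)]
        exact .high_low
      · rw [if_neg hpar, if_pos (by omega)]
        exact .low_high

theorem alternating_edgeClass_ne_five (last : LegEdge R) (x : DSEdge s L R) :
    (alternating s L last).edgeClass x ≠ 5 := by
  rcases x with a | p | p <;> simp only [edgeClass]
  · simp only [alternating]
    split_ifs <;> simp
  · simp only [alternating, legClass, Set.mem_empty_iff_false, and_false, if_false]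
    split_ifs <;> simp
  · split_ifs <;> simp

theorem topped_edgeClass_coreLast (hs : 1 ≤ s) (last : LegEdge R) (top : Set (Fin L.length))
    (htop : ∀ i ∈ top, IsLongOdd (L.get i)) :
    (topped s last top htop).edgeClass (Sum.inl (coreLast hs)) = 5 :=
  if_pos (Nat.sub_add_cancel hs)

end Scheme

theorem isStronglyAntimagic_of_even_of_forall_ne (hs : 1 ≤ s) (hL : ∀ ℓ ∈ L, 1 ≤ ℓ)
    (hone : ∀ ℓ ∈ R, ℓ = 1) (hR : 2 ≤ R.length) (hLR : R.length < L.length) (last : LegEdge R)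
    (heven : s % 2 = 0) (i₀ : Fin L.length) (hleg : ∀ i ≠ i₀, ¬IsLongOdd (L.get i)) :
    IsStronglyAntimagic (DoubleSpider s L R) := by
  let σ := Scheme.alternating s L last
  have hfirst : σ.edgeClass (Sum.inl (coreFirst hs)) = 4 := rfl
  have hlast : σ.edgeClass (Sum.inl (coreLast hs)) = 0 :=
    if_neg (by simp only [coreLast]; omega)
  have hcount := σ.count_four_le hs fun _ => ⟨_, hlast, nextEdge_coreLast hs⟩
  refine σ.isStronglyAntimagic hs hL hone hR hLR (fun x y hxy => ?_) ?_
  · exact (σ.label_add_label_le_lastLabel_add_count_four hs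
      (fun z hz => absurd hz (Scheme.alternating_edgeClass_ne_five last z)) hxy).trans
      (Nat.add_le_add_left hcount _)
  · have hlast_le : σ.lastLabel hs ≤ σ.count 1 := classLabel_le_countLE (by omega)
    have hfirst_gt : σ.count 3 < σ.firstLabel hs := countLE_lt_classLabel (by omega)
    have hlegs := sum_add_mul_le_sum (f := σ.legLabel hL) (m := R.length) (K := σ.count 1 + 1) {i₀}
      (by rw [Finset.card_singleton, Fintype.card_fin]; omega) fun i hi =>
        σ.count_one_lt_legLabel hL fun h => absurd h (hleg i (by simpa using hi))
    obtain ⟨b, hb⟩ : ∃ b, R.length = b + 1 := ⟨R.length - 1, by omega⟩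
    rw [hb, Finset.sum_singleton] at hlegs
    rw [hb, Nat.add_sub_cancel]
    linarith

theorem isStronglyAntimagic_of_odd_of_forall_not_isLongOdd (hs : 1 ≤ s) (hL : ∀ ℓ ∈ L, 1 ≤ ℓ)
    (hone : ∀ ℓ ∈ R, ℓ = 1) (hR : 2 ≤ R.length) (hLR : R.length < L.length) (last : LegEdge R)
    (hodd : s % 2 = 1) (hleg : ∀ i, ¬IsLongOdd (L.get i)) :
    IsStronglyAntimagic (DoubleSpider s L R) := by
  let σ := Scheme.alternating s L last
  have hfirst : σ.edgeClass (Sum.inl (coreFirst hs)) = 4 := rfl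
  have hlast : σ.edgeClass (Sum.inl (coreLast hs)) = 4 :=
    if_pos (by simp only [coreLast]; omega)
  refine σ.isStronglyAntimagic hs hL hone hR hLR (fun x y hxy => ?_) ?_
  · have := σ.label_add_label_le_lastLabel_add_count_zero hs
      (Scheme.alternating_edgeClass_ne_five last) hlast hxy
    omega
  · have : Nonempty (Fin L.length) := ⟨⟨0, by omega⟩⟩
    obtain ⟨i₁, hmax⟩ := Finite.exists_max (σ.legLabel hL)
    have hlast_le := σ.lastLabel_le_firstLabel_add hs hfirst hlast
    have hzero : σ.count 0 ≤ σ.count 1 := countLE_mono zero_le_one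
    have htwo := σ.count_two_le_legLabel hL (fun h => absurd h (hleg i₁)) fun k _ => hmax k
    have hthree := σ.count_three_le
    have hlegs := sum_add_mul_le_sum (f := σ.legLabel hL) (m := R.length) (K := σ.count 1 + 1) {i₁}
      (by rw [Finset.card_singleton, Fintype.card_fin]; omega) fun i _ =>
        σ.count_one_lt_legLabel hL fun h => absurd h (hleg i)
    obtain ⟨b, hb⟩ : ∃ b, R.length = b + 1 := ⟨R.length - 1, by omega⟩
    rw [hb, Finset.sum_singleton] at hlegs
    rw [hb, Nat.add_sub_cancel]
    linarith

theorem isStronglyAntimagic_of_odd_of_exists_isLongOdd (hs : 1 ≤ s) (hL : ∀ ℓ ∈ L, 1 ≤ ℓ)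
    (hone : ∀ ℓ ∈ R, ℓ = 1) (hR : 2 ≤ R.length) (hLR : R.length < L.length) (last : LegEdge R)
    (hodd : s % 2 = 1) (hleg : ∃ i, IsLongOdd (L.get i)) :
    IsStronglyAntimagic (DoubleSpider s L R) := by
  let σ := Scheme.topped s last {i : Fin L.length | IsLongOdd (L.get i)} fun _ h => h
  have hlast : σ.edgeClass (Sum.inl (coreLast hs)) = 5 :=
    Scheme.topped_edgeClass_coreLast hs last _ _
  have hfirst : σ.edgeClass (Sum.inl (coreFirst hs)) ≠ 4 := by
    simp only [σ, Scheme.topped, Scheme.edgeClass, coreFirst]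
    split_ifs <;> omega
  have hcount := σ.count_four_le hs fun h => absurd h hfirst
  refine σ.isStronglyAntimagic hs hL hone hR hLR (fun x y hxy => ?_) ?_
  · exact (σ.label_add_label_le_lastLabel_add_count_four hs (fun _ _ => hlast) hxy).trans
      (Nat.add_le_add_left hcount _)
  · obtain ⟨i₀, hi₀⟩ := hleg
    obtain ⟨i₁, hi₁, hmax₁⟩ := σ.exists_mem_top_forall_legLabel_le hL (i₀ := i₀) hi₀
    obtain ⟨i₂, hi₂, hmax₂⟩ := Finset.exists_max_image ({i₁}ᶜ : Finset (Fin L.length))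
      (σ.legLabel hL) (Finset.card_pos.mp
        (by rw [Finset.card_compl, Finset.card_singleton, Fintype.card_fin]; omega))
    simp only [Finset.mem_compl, Finset.mem_singleton] at hi₂ hmax₂
    have hlast_le := σ.lastLabel_le_legLabel_add_one hs hL hi₁ hlast hmax₁
    have htwo := σ.count_two_le_legLabel hL (i := i₂) id fun k hk =>
      hmax₂ k (ne_of_apply_ne L.get (hk ▸ (σ.isLongOdd_of_mem_top i₁ hi₁).2.symm))
    have hthree := σ.count_three_le
    have hone_lt := σ.one_lt_firstLabel hs hi₁
    have hlegs := sum_add_mul_le_sum (f := σ.legLabel hL) (m := R.length - 1)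
      (K := σ.count 1 + 1) {i₁, i₂}
        (by rw [Finset.card_pair (Ne.symm hi₂), Fintype.card_fin]; omega)
        fun i _ => σ.count_one_lt_legLabel hL id
    obtain ⟨b, hb⟩ : ∃ b, R.length = b + 2 := ⟨R.length - 2, by omega⟩
    rw [Finset.sum_pair (Ne.symm hi₂), hb] at hlegs
    rw [hb]
    simp only [Nat.add_one_sub_one] at hlegs ⊢
    linarith

theorem isStronglyAntimagic_of_even_of_two_isLongOdd (hs : 1 ≤ s) (hL : ∀ ℓ ∈ L, 1 ≤ ℓ)
    (hone : ∀ ℓ ∈ R, ℓ = 1) (hR : 2 ≤ R.length) (hLR : R.length < L.length) (last : LegEdge R)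
    (heven : s % 2 = 0) {i₀ j₀ : Fin L.length} (hij : i₀ ≠ j₀) (hi₀ : IsLongOdd (L.get i₀))
    (hj₀ : IsLongOdd (L.get j₀)) :
    IsStronglyAntimagic (DoubleSpider s L R) := by
  let σ := Scheme.topped s last {i : Fin L.length | IsLongOdd (L.get i) ∧ i ≠ i₀} fun _ h => h.1
  have hlast : σ.edgeClass (Sum.inl (coreLast hs)) = 5 :=
    Scheme.topped_edgeClass_coreLast hs last _ _
  have hfirst : σ.edgeClass (Sum.inl (coreFirst hs)) = 4 := by
    simp only [σ, Scheme.topped, Scheme.edgeClass, coreFirst]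
    rw [if_neg (by omega), if_pos (by omega)]
  have hleg := σ.edgeClass_firstEdge_of_notMem_top hL hi₀ fun h => h.2 rfl
  have hcount := σ.count_four_le hs fun _ => ⟨_, hleg, nextEdge_firstEdge hs hL i₀⟩
  refine σ.isStronglyAntimagic hs hL hone hR hLR (fun x y hxy => ?_) ?_
  · exact (σ.label_add_label_le_lastLabel_add_count_four hs (fun _ _ => hlast) hxy).trans
      (Nat.add_le_add_left hcount _)
  · obtain ⟨i₁, hi₁, hmax⟩ := σ.exists_mem_top_forall_legLabel_le hL (i₀ := j₀) ⟨hj₀, hij.symm⟩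
    have hlast_le := σ.lastLabel_le_legLabel_add_one hs hL hi₁ hlast hmax
    have hfirst_gt : σ.count 3 < σ.firstLabel hs := countLE_lt_classLabel (by omega)
    have hlegs := sum_add_mul_le_sum (f := σ.legLabel hL) (m := R.length - 1)
      (K := σ.count 1 + 1) {i₀, i₁}
        (by rw [Finset.card_pair hi₁.2.symm, Fintype.card_fin]; omega)
        fun i hi => σ.count_one_lt_legLabel hL fun h =>
          ⟨h, fun heq => hi (heq ▸ Finset.mem_insert_self i₀ {i₁})⟩
    obtain ⟨b, hb⟩ : ∃ b, R.length = b + 2 := ⟨R.length - 2, by omega⟩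
    rw [Finset.sum_pair hi₁.2.symm, hb] at hlegs
    rw [hb]
    simp only [Nat.add_one_sub_one] at hlegs ⊢
    linarith

end Cases

end DoubleSpider

/-- Let `DS(L, Pᶜᵒʳᵉ, R)` be a double spider with
`deg(v_l) > deg(v_r) ≥ 3` such that `R` contains no even path and no odd path of length
at least 3, i.e. every leg in `R` has length exactly one.  Then `DS(L, Pᶜᵒʳᵉ, R)` is
strongly antimagic. -/
theorem doubleSpider_right_all_one_isStronglyAntimagic (s : ℕ) (hs : 1 ≤ s) (L R : List ℕ)
    (hL : ∀ ℓ ∈ L, 1 ≤ ℓ) (hR : ∀ ℓ ∈ R, 1 ≤ ℓ)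
    (hlr : (DoubleSpider s L R).degree (vR s L R) < (DoubleSpider s L R).degree (vL s L R))
    (hr : 3 ≤ (DoubleSpider s L R).degree (vR s L R))
    (hone : ∀ ℓ ∈ R, ℓ = 1) :
    IsStronglyAntimagic (DoubleSpider s L R) := by
  rw [degree_eq_card_edgesAt DoubleSpider.bijOn_ends, DoubleSpider.card_edgesAt_vR hs hR] at hlr hr
  rw [degree_eq_card_edgesAt DoubleSpider.bijOn_ends, DoubleSpider.card_edgesAt_vL hs hL] at hlr
  have hLR : R.length < L.length := by omega
  have hR₂ : 2 ≤ R.length := by omega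
  let last := DoubleSpider.firstEdge hR ⟨0, by omega⟩
  rcases Nat.mod_two_eq_zero_or_one s with heven | hodd
  · by_cases hlong : ∃ i₀, ∀ i ≠ i₀, ¬DoubleSpider.IsLongOdd (L.get i)
    · obtain ⟨i₀, hi₀⟩ := hlong
      exact DoubleSpider.isStronglyAntimagic_of_even_of_forall_ne hs hL hone hR₂ hLR
        last heven i₀ hi₀
    · push Not at hlong
      obtain ⟨i₀, -, hi₀⟩ := hlong ⟨0, by omega⟩
      obtain ⟨j₀, hne, hj₀⟩ := hlong i₀
      exact DoubleSpider.isStronglyAntimagic_of_even_of_two_isLongOdd hs hL hone hR₂ hLR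
        last heven hne.symm hi₀ hj₀
  · by_cases hlong : ∃ i, DoubleSpider.IsLongOdd (L.get i)
    · exact DoubleSpider.isStronglyAntimagic_of_odd_of_exists_isLongOdd hs hL hone hR₂ hLR
        last hodd hlong
    · push Not at hlong
      exact DoubleSpider.isStronglyAntimagic_of_odd_of_forall_not_isLongOdd hs hL hone hR₂ hLR
        last hodd hlong

end
end
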